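/- arXiv:1403.7033 — 6 statements merged into one kernel-verified Lean document; each statement's English description precedes it below -/
import Mathlib

section
/- (Hardy–Littlewood inequality with constant 1, Mateljević.) For every complex polynomial f(z) = ∑_{n=0}^d a_n z^n one has (∑_{n=0}^d |a_n|²/(n+1))^{1/2} ≤ (1/2π) ∫_0^{2π} |f(e^{iθ})| dθ. -/
open Finset Real

/-- `f = u v` on the closed disc with `u, v` in the disc algebra and `|u| = |v|` on the circle. -/
def HasBalancedFactor (f : ℂ → ℂ) : Prop :=
  ∃ u v : ℂ → ℂ, DiffContOnCl ℂ u (Metric.ball 0 1) ∧ DiffContOnCl ℂ v (Metric.ball 0 1) ∧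
    (∀ z : ℂ, ‖z‖ ≤ 1 → f z = u z * v z) ∧ (∀ z : ℂ, ‖z‖ = 1 → ‖u z‖ = ‖v z‖)

lemma HasBalancedFactor.mul {f g : ℂ → ℂ} (hf : HasBalancedFactor f)
    (hg : HasBalancedFactor g) : HasBalancedFactor (fun z => f z * g z) := by
  obtain ⟨u, v, hu, hv, h, hn⟩ := hf
  obtain ⟨u', v', hu', hv', h', hn'⟩ := hg
  refine ⟨fun z => u z * u' z, fun z => v z * v' z, hu.smul hu', hv.smul hv', ?_, ?_⟩
  · intro z hz
    simp only [h z hz, h' z hz]; ring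
  · intro z hz
    simp only [norm_mul, hn z hz, hn' z hz]

lemma half_sq (x : ℂ) : x ^ (2⁻¹ : ℂ) * x ^ (2⁻¹ : ℂ) = x := by
  have := Complex.cpow_nat_inv_pow x (n := 2) (by norm_num)
  rw [pow_two] at this
  exact_mod_cast this

lemma HasBalancedFactor.const (c : ℂ) : HasBalancedFactor (fun _ => c) :=
  ⟨fun _ => c ^ (2⁻¹ : ℂ), fun _ => c ^ (2⁻¹ : ℂ), diffContOnCl_const, diffContOnCl_const,
    fun _ _ => (half_sq c).symm, fun _ _ => rfl⟩

lemma diffCont_half (b : ℂ) (hb : ‖b‖ ≤ 1) :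
    DiffContOnCl ℂ (fun z => (1 - b * z) ^ (2⁻¹ : ℂ)) (Metric.ball 0 1) := by
  apply DiffContOnCl.mk_ball
  · intro z hz
    have hz' : ‖z‖ < 1 := by simpa using hz
    have h1 : ‖b * z‖ < 1 := by
      rw [norm_mul]; nlinarith [norm_nonneg b, norm_nonneg z]
    have h2 := (Complex.re_le_norm (b * z))
    apply DifferentiableAt.differentiableWithinAt
    apply DifferentiableAt.cpow_const
    · fun_prop
    · left
      simp only [Complex.sub_re, Complex.one_re]
      linarith
  · intro z hz
    have hz' : ‖z‖ ≤ 1 := by simpa using hz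
    have h1 : ‖b * z‖ ≤ 1 := by
      rw [norm_mul]; nlinarith [norm_nonneg b, norm_nonneg z]
    have h2 := (Complex.re_le_norm (b * z))
    apply ContinuousAt.continuousWithinAt
    have h3 : ContinuousAt (fun x : ℂ => x ^ (2⁻¹ : ℂ)) (1 - b * z) := by
      apply Complex.continuousAt_cpow_const_of_re_pos
      · left
        simp only [Complex.sub_re, Complex.one_re]
        linarith
      · norm_num
    have h4 : ContinuousAt (fun z : ℂ => 1 - b * z) z := by fun_prop
    exact ContinuousAt.comp (f := fun z : ℂ => 1 - b * z) h3 h4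

lemma HasBalancedFactor.linear (α : ℂ) : HasBalancedFactor (fun z => z - α) := by
  rcases le_or_gt 1 ‖α‖ with h | h
  · have hα : α ≠ 0 := by
      rintro rfl
      norm_num at h
    have hb : ‖α⁻¹‖ ≤ 1 := by
      rw [norm_inv]; exact inv_le_one_of_one_le₀ h
    have h1 : HasBalancedFactor (fun z => 1 - α⁻¹ * z) :=
      ⟨_, _, diffCont_half _ hb, diffCont_half _ hb, fun z _ => (half_sq _).symm, fun _ _ => rfl⟩
    have h2 := (HasBalancedFactor.const (-α)).mul h1
    convert h2 using 2 with z
    field_simp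
    ring
  · have hb : ‖(starRingEnd ℂ) α‖ ≤ 1 := by
      rw [RCLike.norm_conj]; exact h.le
    have hd := diffCont_half _ hb
    have hne : ∀ z : ℂ, ‖z‖ ≤ 1 → 1 - (starRingEnd ℂ) α * z ≠ 0 := by
      intro z hz h0
      have : ‖(starRingEnd ℂ) α * z‖ < 1 := by
        rw [norm_mul, RCLike.norm_conj]; nlinarith [norm_nonneg α, norm_nonneg z]
      rw [← sub_eq_zero.mp h0] at this
      norm_num at this
    have hne2 : ∀ z : ℂ, ‖z‖ ≤ 1 → (1 - (starRingEnd ℂ) α * z) ^ (2⁻¹ : ℂ) ≠ 0 := by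
      intro z hz h0
      apply hne z hz
      rw [← half_sq (1 - (starRingEnd ℂ) α * z), h0, zero_mul]
    have hl : DiffContOnCl ℂ (fun z : ℂ => z - α) (Metric.ball 0 1) := by
      apply Differentiable.diffContOnCl
      fun_prop
    have hinv := hd.inv (fun z hz => hne2 z (by
      rw [closure_ball _ one_ne_zero] at hz; simpa using hz))
    refine ⟨_, _, hl.smul hinv, hd, ?_, ?_⟩
    · intro z hz
      have := hne2 z hz
      simp only [Pi.inv_apply, smul_eq_mul]
      rw [mul_assoc, inv_mul_cancel₀ this, mul_one]
    · intro z hz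
      have h0 := hne2 z hz.le
      have h1 := half_sq (1 - (starRingEnd ℂ) α * z)
      simp only [Pi.inv_apply, smul_eq_mul]
      rw [norm_mul, norm_inv, ← div_eq_mul_inv, div_eq_iff (norm_ne_zero_iff.mpr h0),
        ← norm_mul, h1]
      have hzz : (starRingEnd ℂ) z * z = 1 := by
        rw [mul_comm, Complex.mul_conj, Complex.normSq_eq_norm_sq, hz]; simp
      have : 1 - (starRingEnd ℂ) α * z = (starRingEnd ℂ) (z - α) * z := by
        rw [map_sub, sub_mul, hzz]
      rw [this, norm_mul, RCLike.norm_conj, hz, mul_one]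

lemma HasBalancedFactor.poly (p : Polynomial ℂ) : HasBalancedFactor (fun z => p.eval z) := by
  have h : ∀ s : Multiset ℂ, HasBalancedFactor (fun z => (s.map (z - ·)).prod) := by
    intro s
    induction s using Multiset.induction_on with
    | empty => simpa using HasBalancedFactor.const 1
    | cons α s ih =>
      simp only [Multiset.map_cons, Multiset.prod_cons]
      exact (HasBalancedFactor.linear α).mul ih
  have h2 := (HasBalancedFactor.const p.leadingCoeff).mul (h p.roots)
  convert h2 using 2 with z
  exact (IsAlgClosed.splits p).eval_eq_prod_roots z

/-- Taylor coefficients at the origin. -/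
noncomputable def tc (f : ℂ → ℂ) (n : ℕ) : ℂ := iteratedDeriv n f 0 / n.factorial

lemma tc_poly (d : ℕ) (a : ℕ → ℂ) (n : ℕ) (hn : n < d + 1) :
    tc (fun z => ∑ k ∈ Finset.range (d + 1), a k * z ^ k) n = a n := by
  unfold tc
  rw [iteratedDeriv_fun_sum]
  · have : ∀ k, iteratedDeriv n (fun z : ℂ => a k * z ^ k) 0
        = if n = k then a n * n.factorial else 0 := by
      intro k
      rw [iteratedDeriv_const_mul_field, iteratedDeriv_fun_pow_zero]
      split_ifs with h
      · subst h; rfl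
      · simp
    simp only [this]
    rw [Finset.sum_ite_eq, if_pos (by simpa using hn)]
    exact mul_div_cancel_right₀ _ (by exact_mod_cast n.factorial_ne_zero)
  · intro k _
    fun_prop

lemma discContDiffAt {u : ℂ → ℂ} (hu : DiffContOnCl ℂ u (Metric.ball 0 1)) (n : ℕ) :
    ContDiffAt ℂ n u 0 :=
  (hu.differentiableOn.analyticAt (Metric.ball_mem_nhds 0 one_pos)).contDiffAt

lemma tc_mul {f u v : ℂ → ℂ} (hu : DiffContOnCl ℂ u (Metric.ball 0 1))
    (hv : DiffContOnCl ℂ v (Metric.ball 0 1))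
    (h : ∀ z : ℂ, ‖z‖ ≤ 1 → f z = u z * v z) (n : ℕ) :
    tc f n = ∑ i ∈ Finset.range (n + 1), tc u i * tc v (n - i) := by
  unfold tc
  have he : f =ᶠ[nhds 0] (u * v) := by
    filter_upwards [Metric.ball_mem_nhds (0 : ℂ) one_pos] with z hz
    exact h z (by simpa using (Metric.mem_ball.mp hz).le)
  rw [he.iteratedDeriv_eq, iteratedDeriv_mul (discContDiffAt hu n) (discContDiffAt hv n),
    Finset.sum_div]
  apply Finset.sum_congr rfl
  intro i hi
  have hi' : i ≤ n := by simpa [Nat.lt_succ_iff] using hi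
  rw [Nat.cast_choose ℂ hi']
  have h1 : (n.factorial : ℂ) ≠ 0 := by exact_mod_cast n.factorial_ne_zero
  have h2 : (i.factorial : ℂ) ≠ 0 := by exact_mod_cast i.factorial_ne_zero
  have h3 : ((n - i).factorial : ℂ) ≠ 0 := by exact_mod_cast (n - i).factorial_ne_zero
  field_simp

lemma circle_cont {u : ℂ → ℂ} (hu : DiffContOnCl ℂ u (Metric.ball 0 1)) :
    Continuous (fun θ : ℝ => u (Complex.exp (Complex.I * θ))) := by
  have h1 := hu.continuousOn_ball
  refine h1.comp_continuous (by fun_prop) ?_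
  intro θ
  rw [mem_closedBall_zero_iff, mul_comm, Complex.norm_exp_ofReal_mul_I]

lemma tc_eq_fourier {u : ℂ → ℂ} (hu : DiffContOnCl ℂ u (Metric.ball 0 1)) (n : ℕ) :
    fourierCoeffOn two_pi_pos (fun θ : ℝ => u (Complex.exp (Complex.I * θ))) n = tc u n := by
  have h := hu.circleIntegral_one_div_sub_center_pow_smul one_pos n
  rw [fourierCoeffOn_eq_integral]
  have h2 : ∮ z in C(0, 1), (1 / (z - 0) ^ (n + 1)) • u z =
      Complex.I * ∫ x in (0:ℝ)..(2 * π), fourier (-(n : ℤ)) (x : AddCircle (2 * π - 0)) •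
        u (Complex.exp (Complex.I * x)) := by
    rw [circleIntegral, ← intervalIntegral.integral_const_mul]
    apply intervalIntegral.integral_congr
    intro x _
    simp only [deriv_circleMap, circleMap, fourier_coe_apply, smul_eq_mul, sub_zero]
    have e1 : Complex.exp (2 * π * Complex.I * ((-(n : ℤ) : ℤ) : ℂ) * x / ((2 * π : ℝ) : ℂ)) =
        (Complex.exp (Complex.I * x) ^ n)⁻¹ := by
      rw [← Complex.exp_nat_mul, ← Complex.exp_neg]
      congr 1
      push_cast
      have : (π : ℂ) ≠ 0 := by exact_mod_cast pi_ne_zero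
      field_simp
    rw [e1]
    have e2 : Complex.exp (Complex.I * x) ≠ 0 := Complex.exp_ne_zero _
    rw [mul_comm (x : ℂ) Complex.I]
    simp only [Complex.ofReal_one, one_mul, zero_add]
    field_simp
    ring
  rw [h2] at h
  unfold tc
  have hpi : (π : ℂ) ≠ 0 := by exact_mod_cast pi_ne_zero
  have hI := Complex.I_ne_zero
  have h3 : (∫ x in (0:ℝ)..(2 * π), fourier (-(n : ℤ)) (x : AddCircle (2 * π - 0)) •
        u (Complex.exp (Complex.I * x))) = 2 * π * (iteratedDeriv n u 0 / n.factorial) := by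
    apply mul_left_cancel₀ hI
    rw [h, smul_eq_mul]; ring
  rw [h3, Complex.real_smul]
  push_cast
  rw [sub_zero]
  field_simp

lemma bessel {u : ℂ → ℂ} (hu : DiffContOnCl ℂ u (Metric.ball 0 1)) (N : ℕ) :
    ∑ n ∈ Finset.range N, ‖tc u n‖ ^ 2 ≤
      (1 / (2 * π)) * ∫ θ in (0 : ℝ)..(2 * π), ‖u (Complex.exp (Complex.I * θ))‖ ^ 2 := by
  have hc := circle_cont hu
  have hL : MeasureTheory.MemLp (fun θ : ℝ => u (Complex.exp (Complex.I * θ))) 2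
      (MeasureTheory.volume.restrict (Set.Ioc 0 (2 * π))) := by
    refine MeasureTheory.MemLp.of_bound hc.aestronglyMeasurable
      (sSup ((fun θ : ℝ => ‖u (Complex.exp (Complex.I * θ))‖) '' Set.Icc 0 (2 * π))) ?_
    refine (MeasureTheory.ae_restrict_iff' measurableSet_Ioc).mpr (Filter.Eventually.of_forall ?_)
    intro θ hθ
    exact le_csSup (isCompact_Icc.image hc.norm).bddAbove ⟨θ, Set.Ioc_subset_Icc_self hθ, rfl⟩
  have hs := hasSum_sq_fourierCoeffOn two_pi_pos hL
  have h1 := sum_le_hasSum ((Finset.range N).map Nat.castEmbedding) (fun i _ => by positivity) hs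
  rw [Finset.sum_map] at h1
  simpa [tc_eq_fourier hu] using h1

lemma coef_ineq (N : ℕ) (x y c : ℕ → ℂ)
    (hc : ∀ n < N, c n = ∑ i ∈ Finset.range (n + 1), x i * y (n - i)) :
    ∑ n ∈ Finset.range N, ‖c n‖ ^ 2 / ((n : ℝ) + 1) ≤
      (∑ n ∈ Finset.range N, ‖x n‖ ^ 2) * ∑ n ∈ Finset.range N, ‖y n‖ ^ 2 := by
  calc ∑ n ∈ Finset.range N, ‖c n‖ ^ 2 / ((n : ℝ) + 1)
      ≤ ∑ n ∈ Finset.range N, ∑ i ∈ Finset.range (n + 1), ‖x i‖ ^ 2 * ‖y (n - i)‖ ^ 2 := by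
        apply Finset.sum_le_sum
        intro n hn
        rw [hc n (by simpa using hn), div_le_iff₀ (by positivity)]
        calc ‖∑ i ∈ Finset.range (n + 1), x i * y (n - i)‖ ^ 2
            ≤ (∑ i ∈ Finset.range (n + 1), ‖x i * y (n - i)‖) ^ 2 := by
              gcongr
              exact norm_sum_le _ _
          _ ≤ ((Finset.range (n + 1)).card : ℝ) *
                ∑ i ∈ Finset.range (n + 1), ‖x i * y (n - i)‖ ^ 2 := sq_sum_le_card_mul_sum_sq
          _ = _ := by
              simp only [norm_mul, mul_pow, Finset.card_range]
              push_cast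
              ring
    _ = ∑ p ∈ (Finset.range N).sigma (fun n => Finset.range (n + 1)),
          ‖x p.2‖ ^ 2 * ‖y (p.1 - p.2)‖ ^ 2 := by
        rw [Finset.sum_sigma]
    _ = ∑ q ∈ ((Finset.range N).sigma (fun n => Finset.range (n + 1))).image
          (fun p : (_ : ℕ) × ℕ => (p.2, p.1 - p.2)), ‖x q.1‖ ^ 2 * ‖y q.2‖ ^ 2 := by
        rw [Finset.sum_image]
        rintro ⟨a, b⟩ h ⟨a', b'⟩ h' e
        simp only [Finset.coe_sigma, Set.mem_sigma_iff, Finset.mem_coe, Finset.mem_range,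
          Prod.mk.injEq] at h h' e
        obtain ⟨rfl, e⟩ := e
        have : a = a' := by omega
        rw [this]
    _ ≤ ∑ q ∈ Finset.range N ×ˢ Finset.range N, ‖x q.1‖ ^ 2 * ‖y q.2‖ ^ 2 := by
        apply Finset.sum_le_sum_of_subset_of_nonneg
        · rintro ⟨i, j⟩ h
          simp only [Finset.mem_image, Finset.mem_sigma, Finset.mem_range, Prod.mk.injEq] at h
          obtain ⟨⟨a, b⟩, h1, h2, h3⟩ := h
          simp only [Finset.mem_product, Finset.mem_range]
          dsimp only at *
          omega
        · intros; positivity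
    _ = _ := by
        rw [Finset.sum_product, Finset.sum_mul_sum]

open Finset Real

/-- **Hardy–Littlewood inequality with constant 1 (Mateljević).**
For every complex polynomial `f(z) = ∑_{n=0}^d a_n z^n`,
`(∑_{n=0}^d |a_n|²/(n+1))^{1/2} ≤ (1/2π) ∫_0^{2π} |f(e^{iθ})| dθ`. -/
theorem hardy_littlewood_mateljevic (d : ℕ) (a : ℕ → ℂ) :
    Real.sqrt (∑ n ∈ Finset.range (d + 1), ‖a n‖ ^ 2 / ((n : ℝ) + 1))
      ≤ (1 / (2 * π)) *
        ∫ θ in (0 : ℝ)..(2 * π),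
          ‖∑ n ∈ Finset.range (d + 1),
            a n * Complex.exp (Complex.I * θ) ^ n‖ := by
  obtain ⟨u, v, hu, hv, h, hn⟩ := HasBalancedFactor.poly
    (∑ n ∈ Finset.range (d + 1), Polynomial.C (a n) * Polynomial.X ^ n)
  simp only [Polynomial.eval_finsetSum, Polynomial.eval_mul, Polynomial.eval_C,
    Polynomial.eval_pow, Polynomial.eval_X] at h
  have h1 := coef_ineq (d + 1) (tc u) (tc v) a (fun n hlt => by
    rw [← tc_mul hu hv h, tc_poly d a n hlt])
  have hexp : ∀ θ : ℝ, ‖Complex.exp (Complex.I * θ)‖ = 1 := fun θ => by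
    rw [mul_comm, Complex.norm_exp_ofReal_mul_I]
  have hU : ∀ θ : ℝ, ‖u (Complex.exp (Complex.I * θ))‖ ^ 2 =
      ‖∑ n ∈ Finset.range (d + 1), a n * Complex.exp (Complex.I * θ) ^ n‖ := fun θ => by
    rw [h _ (hexp θ).le, norm_mul, ← hn _ (hexp θ), pow_two]
  have hV : ∀ θ : ℝ, ‖v (Complex.exp (Complex.I * θ))‖ ^ 2 =
      ‖∑ n ∈ Finset.range (d + 1), a n * Complex.exp (Complex.I * θ) ^ n‖ := fun θ => by
    rw [h _ (hexp θ).le, norm_mul, hn _ (hexp θ), pow_two]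
  have bu := bessel hu (d + 1)
  have bv := bessel hv (d + 1)
  simp only [hU] at bu
  simp only [hV] at bv
  have hs : 0 ≤ ∑ n ∈ Finset.range (d + 1), ‖tc u n‖ ^ 2 := by positivity
  have hs' : 0 ≤ ∑ n ∈ Finset.range (d + 1), ‖tc v n‖ ^ 2 := by positivity
  apply Real.sqrt_le_iff.mpr
  refine ⟨hs.trans bu, h1.trans ?_⟩
  rw [pow_two]
  exact mul_le_mul bu bv hs' (hs.trans bu)
end

section
/- For every complex polynomial f one has ∫_𝔻 |f(z)|² dm(z) ≤ (∫_𝕋 |f(w)| dσ(w))², where dm is the normalized Lebesgue (area) measure on the open unit disc 𝔻 (total mass 1) and dσ is the normalized arc-length measure on the unit circle 𝕋. That is, the Bergman B₂(𝔻) norm of f is at most its Hardy H¹(𝕋) norm. -/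
open MeasureTheory Real

lemma circ_parseval (p : Polynomial ℂ) (r : ℝ) :
    circleAverage (fun z => ‖p.eval z‖ ^ 2) 0 r
      = ∑ i ∈ Finset.range (p.natDegree + 1), ‖p.coeff i‖ ^ 2 * r ^ (2 * i) := by
  have h1 := (p.comp (Polynomial.C (r : ℂ) * Polynomial.X)).sum_sq_norm_coeff_eq_circleAverage
  have h2 : circleAverage (fun z => ‖p.eval z‖ ^ 2) 0 r
      = circleAverage (fun z => ‖(p.comp (Polynomial.C (r : ℂ) * Polynomial.X)).eval z‖ ^ 2) 0 1 := by
    simp [circleAverage_def, circleMap]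
  rw [h2, ← h1]
  rw [Finset.sum_subset (s₂ := Finset.range (p.natDegree + 1))]
  · refine Finset.sum_congr rfl fun i _ => ?_
    rw [Polynomial.comp_C_mul_X_coeff, norm_mul, mul_pow, norm_pow]
    congr 1
    rw [← pow_mul, mul_comm i 2, pow_mul, pow_mul]; simp
  · intro i hi
    rw [Polynomial.mem_support_iff, Polynomial.comp_C_mul_X_coeff] at hi
    have : p.coeff i ≠ 0 := left_ne_zero_of_mul hi
    have := Polynomial.le_natDegree_of_ne_zero this
    simp; omega
  · intro i _ hi
    rw [Polynomial.notMem_support_iff] at hi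
    simp [hi]

lemma disc_polar (F : ℂ → ℝ) (hF : Continuous F) :
    ∫ z in Metric.ball (0 : ℂ) 1, F z = ∫ r in (0:ℝ)..1, r * (2 * π * circleAverage F 0 r) := by
  rw [← integral_indicator Metric.isOpen_ball.measurableSet, ← Complex.integral_comp_polarCoord_symm]
  have key : ∀ q ∈ polarCoord.target,
      q.1 • (Metric.ball (0 : ℂ) 1).indicator F (Complex.polarCoord.symm q)
      = (Set.Ioo (0:ℝ) 1 ×ˢ Set.Ioo (-π) π).indicator
          (fun q : ℝ × ℝ => q.1 * F (circleMap 0 q.1 q.2)) q := by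
    rintro ⟨r, θ⟩ hq
    simp only [polarCoord_target, Set.mem_prod, Set.mem_Ioi] at hq
    have e : Complex.polarCoord.symm (r, θ) = circleMap 0 r θ := by
      rw [Complex.polarCoord_symm_apply, circleMap, Complex.exp_mul_I]; simp
    rw [e]
    by_cases h : r < 1
    · rw [Set.indicator_of_mem, Set.indicator_of_mem]
      · simp
      · exact ⟨⟨hq.1, h⟩, hq.2⟩
      · simp [abs_of_pos hq.1, h]
    · rw [Set.indicator_of_notMem, Set.indicator_of_notMem]
      · simp
      · rintro ⟨⟨_, h'⟩, _⟩; exact h h'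
      · simpa [abs_of_pos hq.1] using h
  have ms : MeasurableSet (Set.Ioo (0:ℝ) 1 ×ˢ Set.Ioo (-π) π) :=
    measurableSet_Ioo.prod measurableSet_Ioo
  rw [setIntegral_congr_fun polarCoord.open_target.measurableSet key,
    setIntegral_indicator ms, Set.inter_eq_right.2]
  swap
  · rintro ⟨r, θ⟩ ⟨h1, h2⟩
    exact ⟨h1.1, h2⟩
  have hc : Continuous (fun q : ℝ × ℝ => q.1 * F (circleMap 0 q.1 q.2)) := by
    unfold circleMap; fun_prop
  rw [Measure.volume_eq_prod, setIntegral_prod]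
  · rw [intervalIntegral.integral_of_le zero_le_one, integral_Ioc_eq_integral_Ioo]
    refine setIntegral_congr_fun measurableSet_Ioo fun r _ => ?_
    simp only
    rw [integral_const_mul, ← integral_Ioc_eq_integral_Ioo,
      ← intervalIntegral.integral_of_le (by linarith [pi_pos]), circleAverage_def]
    have hp : Function.Periodic (fun θ => F (circleMap 0 r θ)) (2 * π) :=
      (periodic_circleMap 0 r).comp F
    have := hp.intervalIntegral_add_eq (-π) 0
    rw [show -π + 2 * π = π by ring, zero_add] at this
    rw [this, smul_eq_mul, mul_inv_cancel_left₀ (by positivity)]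
  · have : IsCompact (Set.Icc (0:ℝ) 1 ×ˢ Set.Icc (-π) π) := isCompact_Icc.prod isCompact_Icc
    exact (hc.continuousOn.integrableOn_compact this).mono_set
      (Set.prod_mono Set.Ioo_subset_Icc_self Set.Ioo_subset_Icc_self)

lemma disc_parseval (p : Polynomial ℂ) :
    (1 / π) * ∫ z in Metric.ball (0 : ℂ) 1, ‖p.eval z‖ ^ 2
      = ∑ i ∈ Finset.range (p.natDegree + 1), ‖p.coeff i‖ ^ 2 / (i + 1) := by
  rw [disc_polar _ (by fun_prop)]
  simp_rw [circ_parseval, Finset.mul_sum]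
  rw [intervalIntegral.integral_finsetSum (fun i _ => by
    apply Continuous.intervalIntegrable; fun_prop), Finset.mul_sum]
  refine Finset.sum_congr rfl fun i _ => ?_
  have : ∀ r : ℝ, r * (2 * π * (‖p.coeff i‖ ^ 2 * r ^ (2 * i)))
    = (2 * π * ‖p.coeff i‖ ^ 2) * r ^ (2 * i + 1) := by intro r; ring
  simp_rw [this]
  rw [intervalIntegral.integral_const_mul, integral_pow]
  have := pi_ne_zero
  push_cast
  field_simp
  simp
  ring

lemma coeff_ineq (p : Polynomial ℂ) :
    ∑ n ∈ Finset.range ((p ^ 2).natDegree + 1), ‖(p ^ 2).coeff n‖ ^ 2 / (n + 1)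
      ≤ (∑ i ∈ Finset.range (p.natDegree + 1), ‖p.coeff i‖ ^ 2) ^ 2 := by
  let q : Polynomial ℝ := ∑ i ∈ Finset.range (p.natDegree + 1), Polynomial.monomial i (‖p.coeff i‖ ^ 2)
  have hq : ∀ i, q.coeff i = ‖p.coeff i‖ ^ 2 := by
    intro i
    simp only [q, Polynomial.finsetSum_coeff, Polynomial.coeff_monomial, Finset.sum_ite_eq']
    split_ifs with h
    · rfl
    · rw [Polynomial.coeff_eq_zero_of_natDegree_lt (by simpa using h)]; simp
  have h1 : q.eval 1 = ∑ i ∈ Finset.range (p.natDegree + 1), ‖p.coeff i‖ ^ 2 := by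
    simp [q, Polynomial.eval_finsetSum]
  have hn : ∀ n, 0 ≤ (q ^ 2).coeff n := by
    intro n
    rw [sq, Polynomial.coeff_mul]
    exact Finset.sum_nonneg fun x _ => by rw [hq, hq]; positivity
  rw [← h1, ← Polynomial.eval_pow]
  rw [Polynomial.eval_eq_sum_range' (n := max ((p ^ 2).natDegree + 1) ((q ^ 2).natDegree + 1))
    (by omega)]
  simp only [one_pow, mul_one]
  refine le_trans ?_ (Finset.sum_le_sum_of_subset_of_nonneg
    (Finset.range_mono (le_max_left _ _)) fun n _ _ => hn n)
  refine Finset.sum_le_sum fun n _ => ?_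
  rw [div_le_iff₀ (by positivity), sq p, sq q, Polynomial.coeff_mul, Polynomial.coeff_mul]
  calc _ ≤ (∑ x ∈ Finset.HasAntidiagonal.antidiagonal n, ‖p.coeff x.1 * p.coeff x.2‖) ^ 2 := by
        gcongr; exact norm_sum_le _ _
    _ ≤ (Finset.HasAntidiagonal.antidiagonal n).card * ∑ x ∈ Finset.HasAntidiagonal.antidiagonal n, ‖p.coeff x.1 * p.coeff x.2‖ ^ 2 :=
        sq_sum_le_card_mul_sum_sq
    _ = _ := by
        rw [Finset.Nat.card_antidiagonal, mul_comm]; push_cast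
        congr 1
        refine Finset.sum_congr rfl fun x _ => ?_
        rw [hq, hq, norm_mul, mul_pow]

lemma sq_case (p : Polynomial ℂ) :
    (1 / π) * ∫ z in Metric.ball (0 : ℂ) 1, ‖(p ^ 2).eval z‖ ^ 2
      ≤ (circleAverage (fun z => ‖(p ^ 2).eval z‖) 0 1) ^ 2 := by
  rw [disc_parseval]
  have := circ_parseval p 1
  simp only [one_pow, mul_one] at this
  simp only [Polynomial.eval_pow, norm_pow]
  rw [this]
  exact coeff_ineq p

open Filter Topology in
lemma tendsto_step (p : ℕ → Polynomial ℂ) (f : Polynomial ℂ)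
    (hp : Tendsto (fun n => ((p n) ^ 2).toContinuousMapOn (Metric.closedBall (0:ℂ) 1)) atTop
      (𝓝 (f.toContinuousMapOn (Metric.closedBall (0:ℂ) 1)))) :
    (1 / π) * ∫ z in Metric.ball (0 : ℂ) 1, ‖f.eval z‖ ^ 2
      ≤ (circleAverage (fun z => ‖f.eval z‖) 0 1) ^ 2 := by
  have hpt : ∀ z : ℂ, ‖z‖ ≤ 1 → Tendsto (fun n => ‖((p n) ^ 2).eval z‖) atTop (𝓝 ‖f.eval z‖) := by
    intro z hz
    have hz' : z ∈ Metric.closedBall (0:ℂ) 1 := by simpa using hz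
    have := ((continuous_eval_const (F := C(Metric.closedBall (0:ℂ) 1, ℂ))
      (⟨z, hz'⟩ : Metric.closedBall (0:ℂ) 1)).tendsto _).comp hp
    exact this.norm
  obtain ⟨M, hM⟩ := hp.norm.bddAbove_range
  have hb : ∀ n, ∀ z : ℂ, ‖z‖ ≤ 1 → ‖((p n) ^ 2).eval z‖ ≤ M := by
    intro n z hz
    have hz' : z ∈ Metric.closedBall (0:ℂ) 1 := by simpa using hz
    exact (((p n ^ 2).toContinuousMapOn (Metric.closedBall (0:ℂ) 1)).norm_coe_le_norm
      ⟨z, hz'⟩).trans (hM ⟨n, rfl⟩)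
  have hM0 : 0 ≤ M := (norm_nonneg _).trans (hb 0 0 (by simp))
  have h1 : Tendsto (fun n => ∫ z in Metric.ball (0 : ℂ) 1, ‖((p n) ^ 2).eval z‖ ^ 2) atTop
      (𝓝 (∫ z in Metric.ball (0 : ℂ) 1, ‖f.eval z‖ ^ 2)) := by
    refine tendsto_integral_of_dominated_convergence (fun _ => M ^ 2) ?_ ?_ ?_ ?_
    · intro n
      exact Continuous.aestronglyMeasurable (by fun_prop)
    · exact integrableOn_const measure_ball_lt_top.ne
    · intro n
      filter_upwards [ae_restrict_mem Metric.isOpen_ball.measurableSet] with z hz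
      rw [norm_pow, norm_norm]
      have : ‖z‖ < 1 := by simpa using hz
      exact pow_le_pow_left₀ (norm_nonneg _) (hb n z this.le) 2
    · filter_upwards [ae_restrict_mem Metric.isOpen_ball.measurableSet] with z hz
      have : ‖z‖ < 1 := by simpa using hz
      exact (hpt z this.le).pow 2
  have h2 : Tendsto (fun n => circleAverage (fun z => ‖((p n) ^ 2).eval z‖) 0 1) atTop
      (𝓝 (circleAverage (fun z => ‖f.eval z‖) 0 1)) := by
    simp only [circleAverage_def]
    refine Tendsto.const_smul ?_ _
    refine intervalIntegral.tendsto_integral_filter_of_dominated_convergence (fun _ => M) ?_ ?_ ?_ ?_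
    · refine Eventually.of_forall fun n => Continuous.aestronglyMeasurable (by fun_prop)
    · refine Eventually.of_forall fun n => ae_of_all _ fun θ _ => ?_
      rw [norm_norm]
      exact hb n _ (by simp)
    · simp
    · exact ae_of_all _ fun θ _ => hpt _ (by simp)
  exact le_of_tendsto_of_tendsto' (h1.const_mul _) (h2.pow 2) fun n => sq_case (p n)

/-- Weierstrass iteration for `1 - √(1-X)`. -/
noncomputable def wIter : ℕ → Polynomial ℝ
  | 0 => 0
  | n + 1 => Polynomial.C (1 / 2) * (Polynomial.X + wIter n ^ 2)

def NN (q : Polynomial ℝ) : Prop := ∀ i, 0 ≤ q.coeff i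

lemma NN.mul {p q : Polynomial ℝ} (hp : NN p) (hq : NN q) : NN (p * q) := fun i => by
  rw [Polynomial.coeff_mul]
  exact Finset.sum_nonneg fun x _ => mul_nonneg (hp _) (hq _)

lemma NN.add {p q : Polynomial ℝ} (hp : NN p) (hq : NN q) : NN (p + q) := fun i => by
  rw [Polynomial.coeff_add]
  exact add_nonneg (hp _) (hq _)

lemma NN_half : NN (Polynomial.C (1 / 2)) := fun i => by
  rw [Polynomial.coeff_C]; split_ifs <;> norm_num

lemma NN_X : NN Polynomial.X := fun i => by
  rw [Polynomial.coeff_X]; split_ifs <;> norm_num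

lemma NN_w (n : ℕ) : NN (wIter n) := by
  induction n with
  | zero => intro i; simp [wIter]
  | succ n ih => rw [wIter, sq]; exact NN_half.mul (NN_X.add (ih.mul ih))

lemma NN_dw (n : ℕ) : NN (wIter (n + 1) - wIter n) := by
  induction n with
  | zero =>
    simp only [wIter]
    simpa using NN_half.mul NN_X
  | succ n ih =>
    have : wIter (n + 2) - wIter (n + 1)
        = Polynomial.C (1 / 2) * ((wIter (n + 1) - wIter n) * (wIter (n + 1) + wIter n)) := by
      rw [wIter]
      conv_lhs => rw [show wIter (n+1) = Polynomial.C (1 / 2) * (Polynomial.X + wIter n ^ 2) from rfl]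
      rw [show wIter (n+1) = Polynomial.C (1 / 2) * (Polynomial.X + wIter n ^ 2) from rfl]
      ring
    rw [this]
    exact NN_half.mul (ih.mul ((NN_w _).add (NN_w _)))

lemma NN.bound {q : Polynomial ℝ} (hq : NN q) (z : ℂ) (hz : ‖z‖ ≤ 1) :
    ‖(q.map (algebraMap ℝ ℂ)).eval z‖ ≤ q.eval 1 := by
  rw [Polynomial.eval_map, Polynomial.eval₂_eq_sum_range, Polynomial.eval_eq_sum_range]
  refine norm_sum_le_of_le _ fun i _ => ?_
  rw [norm_mul, norm_pow, one_pow, mul_one]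
  simp only [Complex.coe_algebraMap, Complex.norm_real, norm_eq_abs, abs_of_nonneg (hq i)]
  exact mul_le_of_le_one_right (hq i) (pow_le_one₀ (norm_nonneg _) hz)

lemma NN.eval_nonneg {q : Polynomial ℝ} (hq : NN q) : 0 ≤ q.eval 1 :=
  (norm_nonneg _).trans (hq.bound 0 (by simp))

open Filter Topology in
lemma w_tendsto : Tendsto (fun n => 2 * ((wIter (n + 1)).eval 1 - (wIter n).eval 1)) atTop (𝓝 0) := by
  have hm : Monotone fun n => (wIter n).eval 1 := monotone_nat_of_le_succ fun n => by
    have := (NN_dw n).eval_nonneg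
    rw [Polynomial.eval_sub] at this
    linarith
  have hb : ∀ n, (wIter n).eval 1 ≤ 1 := by
    intro n
    induction n with
    | zero => simp [wIter]
    | succ n ih =>
      have := (NN_w n).eval_nonneg
      simp only [wIter, Polynomial.eval_mul, Polynomial.eval_C, Polynomial.eval_add,
        Polynomial.eval_X, Polynomial.eval_pow]
      nlinarith
  have ht := tendsto_atTop_ciSup hm ⟨1, by rintro _ ⟨n, rfl⟩; exact hb n⟩
  have := ((ht.comp (tendsto_add_atTop_nat 1)).sub ht).const_mul 2
  simpa using this

open Filter Topology in
/-- `f` is a uniform limit on the closed disc of squares of polynomials. -/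
def Appr (f : Polynomial ℂ) : Prop :=
  ∃ p : ℕ → Polynomial ℂ,
    Tendsto (fun n => ((p n) ^ 2).toContinuousMapOn (Metric.closedBall (0:ℂ) 1)) atTop
      (𝓝 (f.toContinuousMapOn (Metric.closedBall (0:ℂ) 1)))

lemma Appr.mul {f g : Polynomial ℂ} (hf : Appr f) (hg : Appr g) : Appr (f * g) := by
  obtain ⟨p, hp⟩ := hf
  obtain ⟨q, hq⟩ := hg
  refine ⟨fun n => p n * q n, ?_⟩
  have := hp.mul hq
  simp only [← Polynomial.toContinuousMapOnAlgHom_apply] at this ⊢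
  simp only [mul_pow, map_mul] at this ⊢
  exact this

lemma Appr_C (c : ℂ) : Appr (Polynomial.C c) := by
  obtain ⟨s, hs⟩ := IsAlgClosed.exists_pow_nat_eq c (n := 2) (by norm_num)
  refine ⟨fun _ => Polynomial.C s, ?_⟩
  rw [← hs, Polynomial.C_pow]
  exact tendsto_const_nhds

open Filter Topology in
lemma Appr_lin (a : ℂ) (ha : ‖a‖ ≤ 1) : Appr (1 - Polynomial.C a * Polynomial.X) := by
  refine ⟨fun n => (1 - (wIter n).map (algebraMap ℝ ℂ)).comp (Polynomial.C a * Polynomial.X), ?_⟩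
  rw [tendsto_iff_norm_sub_tendsto_zero]
  refine squeeze_zero (fun _ => norm_nonneg _) (fun n => ?_) w_tendsto
  have h0 := (NN_dw n).eval_nonneg
  rw [Polynomial.eval_sub] at h0
  rw [ContinuousMap.norm_le _ (by linarith)]
  rintro ⟨z, hz⟩
  have hz1 : ‖z‖ ≤ 1 := by simpa using hz
  have hb := (NN_dw n).bound (a * z) (by rw [norm_mul]; exact mul_le_one₀ ha (norm_nonneg _) hz1)
  rw [Polynomial.eval_sub] at hb
  have e : (((1 - (wIter n).map (algebraMap ℝ ℂ)).comp (Polynomial.C a * Polynomial.X)) ^ 2).eval z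
      - (1 - Polynomial.C a * Polynomial.X).eval z
      = 2 * ((wIter (n + 1) - wIter n).map (algebraMap ℝ ℂ)).eval (a * z) := by
    simp only [wIter, Polynomial.map_sub, Polynomial.map_mul, Polynomial.map_add, Polynomial.map_pow,
      Polynomial.map_C, Polynomial.map_X, Polynomial.eval_sub, Polynomial.eval_mul,
      Polynomial.eval_add, Polynomial.eval_pow, Polynomial.eval_C, Polynomial.eval_X,
      Polynomial.eval_comp, Polynomial.eval_one]
    simp
    ring
  change ‖(((1 - (wIter n).map (algebraMap ℝ ℂ)).comp (Polynomial.C a * Polynomial.X)) ^ 2).eval z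
      - (1 - Polynomial.C a * Polynomial.X).eval z‖ ≤ _
  rw [e, norm_mul, Complex.norm_ofNat]
  linarith

/-- `f` is dominated by an approximable polynomial with the same modulus on the circle. -/
def Dom (f : Polynomial ℂ) : Prop :=
  ∃ g, Appr g ∧ (∀ z : ℂ, ‖z‖ ≤ 1 → ‖f.eval z‖ ≤ ‖g.eval z‖) ∧
    (∀ z : ℂ, ‖z‖ = 1 → ‖f.eval z‖ = ‖g.eval z‖)

lemma Dom.mul {f g : Polynomial ℂ} (hf : Dom f) (hg : Dom g) : Dom (f * g) := by
  obtain ⟨u, hu, hu1, hu2⟩ := hf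
  obtain ⟨v, hv, hv1, hv2⟩ := hg
  refine ⟨u * v, hu.mul hv, fun z hz => ?_, fun z hz => ?_⟩
  · rw [Polynomial.eval_mul, Polynomial.eval_mul, norm_mul, norm_mul]
    exact mul_le_mul (hu1 z hz) (hv1 z hz) (norm_nonneg _) (norm_nonneg _)
  · rw [Polynomial.eval_mul, Polynomial.eval_mul, norm_mul, norm_mul, hu2 z hz, hv2 z hz]

lemma Dom_C (c : ℂ) : Dom (Polynomial.C c) := ⟨_, Appr_C c, fun _ _ => le_rfl, fun _ _ => rfl⟩

lemma blaschke_id (z r : ℂ) : ‖1 - (starRingEnd ℂ) r * z‖ ^ 2 - ‖z - r‖ ^ 2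
    = (1 - ‖z‖ ^ 2) * (1 - ‖r‖ ^ 2) := by
  simp only [Complex.sq_norm, Complex.normSq_apply]
  simp
  ring

lemma Dom_lin (r : ℂ) : Dom (Polynomial.X - Polynomial.C r) := by
  by_cases hr : ‖r‖ < 1
  · refine ⟨_, Appr_lin ((starRingEnd ℂ) r) (by simpa using hr.le), fun z hz => ?_, fun z hz => ?_⟩
    · have := blaschke_id z r
      simp only [Polynomial.eval_sub, Polynomial.eval_mul, Polynomial.eval_C, Polynomial.eval_X,
        Polynomial.eval_one]
      refine le_of_sq_le_sq ?_ (norm_nonneg _)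
      have h3 : 0 ≤ (1 - ‖z‖ ^ 2) * (1 - ‖r‖ ^ 2) := by
        apply mul_nonneg <;> nlinarith [norm_nonneg z, norm_nonneg r]
      linarith
    · have := blaschke_id z r
      simp only [Polynomial.eval_sub, Polynomial.eval_mul, Polynomial.eval_C, Polynomial.eval_X,
        Polynomial.eval_one]
      rw [hz] at this
      refine (sq_eq_sq₀ (norm_nonneg _) (norm_nonneg _)).1 ?_
      linarith
  · push Not at hr
    have hr0 : r ≠ 0 := by rintro rfl; simp at hr; linarith
    have e : Polynomial.X - Polynomial.C r
        = Polynomial.C (-r) * (1 - Polynomial.C r⁻¹ * Polynomial.X) := by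
      rw [mul_sub, ← mul_assoc, ← Polynomial.C_mul, neg_mul, mul_inv_cancel₀ hr0]
      simp; ring
    rw [e]
    exact ⟨_, (Appr_C _).mul (Appr_lin _ (by rw [norm_inv]; exact inv_le_one_of_one_le₀ hr)),
      fun _ _ => le_rfl, fun _ _ => rfl⟩

lemma Dom_all (f : Polynomial ℂ) : Dom f := by
  rw [(IsAlgClosed.splits f).eq_prod_roots]
  refine (Dom_C _).mul ?_
  induction f.roots using Multiset.induction_on with
  | empty => simpa using Dom_C 1
  | cons a s ih =>
    rw [Multiset.map_cons, Multiset.prod_cons]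
    exact (Dom_lin a).mul ih

/-- **The Hardy space `H¹(𝕋)` embeds into the Bergman space `B₂(𝔻)` with constant 1.**
For every complex polynomial `f`,
`∫_𝔻 |f(z)|² dm(z) ≤ (∫_𝕋 |f(w)| dσ(w))²`, where `dm` is normalized area measure
on the unit disc and `dσ` is normalized arc-length on the unit circle. -/
theorem bergman_le_hardy (f : Polynomial ℂ) :
    (1 / π) * ∫ z in Metric.ball (0 : ℂ) 1, ‖f.eval z‖ ^ 2
      ≤ ((1 / (2 * π)) *
          ∫ θ in (0 : ℝ)..(2 * π),
            ‖f.eval (Complex.exp (Complex.I * θ))‖) ^ 2 := by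
  obtain ⟨g, ⟨p, hp⟩, h1, h2⟩ := Dom_all f
  have hg := tendsto_step p g hp
  have hc : (1 / (2 * π)) * ∫ θ in (0 : ℝ)..(2 * π), ‖f.eval (Complex.exp (Complex.I * θ))‖
      = circleAverage (fun z => ‖g.eval z‖) 0 1 := by
    rw [circleAverage_def, smul_eq_mul, one_div]
    congr 1
    refine intervalIntegral.integral_congr fun θ _ => ?_
    have e : Complex.exp (Complex.I * θ) = circleMap 0 1 θ := by
      simp [circleMap, mul_comm]
    rw [e, h2 _ (by simp)]
  rw [hc]
  refine le_trans ?_ hg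
  have hi : ∀ q : Polynomial ℂ,
      IntegrableOn (fun z : ℂ => ‖q.eval z‖ ^ 2) (Metric.ball (0 : ℂ) 1) := fun q =>
    (ContinuousOn.integrableOn_compact (isCompact_closedBall (0 : ℂ) 1)
      (Continuous.continuousOn (by fun_prop))).mono_set Metric.ball_subset_closedBall
  refine mul_le_mul_of_nonneg_left ?_ (by positivity)
  refine setIntegral_mono_on (hi f) (hi g) Metric.isOpen_ball.measurableSet fun z hz => ?_
  have hz1 : ‖z‖ < 1 := by simpa using hz
  exact pow_le_pow_left₀ (norm_nonneg _) (h1 z hz1.le) 2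
end

section
/- (Bayart's inequality.) Let m, N ≥ 1 and let P(z) = ∑_{|α|=m} c_α z^α be an m-homogeneous polynomial in N complex variables. Then (∑_{|α|=m} |c_α|²)^{1/2} ≤ 2^{m/2} ∫_{𝕋^N} |∑_{|α|=m} c_α w^α| dσ(w), where σ is the normalized Haar measure on the N-torus 𝕋^N. -/
open Finset MeasureTheory Real

namespace Bayart

/-- absolutely summable coefficients -/
def AbsS (G : PowerSeries ℂ) : Prop := Summable fun n => ‖PowerSeries.coeff n G‖

/-- evaluation of a power series -/
noncomputable def ev (G : PowerSeries ℂ) (w : ℂ) : ℂ := ∑' n, PowerSeries.coeff n G * w ^ n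

theorem AbsS.sum {G : PowerSeries ℂ} (hG : AbsS G) {w : ℂ} (hw : ‖w‖ = 1) :
    Summable fun n => ‖PowerSeries.coeff n G * w ^ n‖ := by
  simpa [hw, AbsS] using hG

theorem AbsS.mul {G H : PowerSeries ℂ} (hG : AbsS G) (hH : AbsS H) : AbsS (G * H) := by
  unfold AbsS
  simp only [PowerSeries.coeff_mul]
  exact summable_norm_sum_mul_antidiagonal_of_summable_norm
    (f := fun n => PowerSeries.coeff n G) (g := fun n => PowerSeries.coeff n H) hG hH

theorem AbsS.sub {G H : PowerSeries ℂ} (hG : AbsS G) (hH : AbsS H) : AbsS (G - H) := by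
  unfold AbsS
  refine Summable.of_nonneg_of_le (fun _ => norm_nonneg _) (fun n => ?_) (Summable.add hG hH)
  rw [map_sub]
  exact norm_sub_le _ _

theorem ev_mul {G H : PowerSeries ℂ} (hG : AbsS G) (hH : AbsS H) {w : ℂ} (hw : ‖w‖ = 1) :
    ev (G * H) w = ev G w * ev H w := by
  unfold ev
  rw [tsum_mul_tsum_eq_tsum_sum_antidiagonal_of_summable_norm (hG.sum hw) (hH.sum hw)]
  refine tsum_congr fun n => ?_
  rw [PowerSeries.coeff_mul, Finset.sum_mul]
  refine Finset.sum_congr rfl fun x hx => ?_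
  rw [← Finset.HasAntidiagonal.mem_antidiagonal.1 hx, pow_add]
  ring

theorem absS_poly (p : Polynomial ℂ) : AbsS (p : PowerSeries ℂ) := by
  unfold AbsS
  refine summable_of_ne_finset_zero (s := Finset.range (p.natDegree + 1)) fun n hn => ?_
  rw [Polynomial.coeff_coe, Polynomial.coeff_eq_zero_of_natDegree_lt, norm_zero]
  simpa using hn

theorem ev_poly (p : Polynomial ℂ) (w : ℂ) : ev (p : PowerSeries ℂ) w = p.eval w := by
  unfold ev
  rw [Polynomial.eval_eq_sum_range, tsum_eq_sum (s := Finset.range (p.natDegree + 1))]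
  · simp
  · intro n hn
    rw [Polynomial.coeff_coe, Polynomial.coeff_eq_zero_of_natDegree_lt, zero_mul]
    simpa using hn

theorem AbsS.rescale {G : PowerSeries ℂ} (hG : AbsS G) {b : ℂ} (hb : ‖b‖ ≤ 1) :
    AbsS (PowerSeries.rescale b G) := by
  refine Summable.of_nonneg_of_le (fun _ => norm_nonneg _) (fun n => ?_) hG
  rw [PowerSeries.coeff_rescale, norm_mul, norm_pow]
  exact mul_le_of_le_one_left (norm_nonneg _) (pow_le_one₀ (norm_nonneg _) hb)

theorem catalan_partial (n : ℕ) :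
    ∑ k ∈ Finset.range n, (catalan k : ℝ) / 4 ^ k = 2 - 2 * (n.centralBinom : ℝ) / 4 ^ n := by
  induction n with
  | zero => simp
  | succ n ih =>
    rw [Finset.sum_range_succ, ih]
    have h1 : ((n : ℝ) + 1) * catalan n = n.centralBinom := by
      exact_mod_cast succ_mul_catalan_eq_centralBinom n
    have h2 : ((n : ℝ) + 1) * (n + 1).centralBinom = 2 * (2 * n + 1) * n.centralBinom := by
      exact_mod_cast Nat.succ_mul_centralBinom_succ n
    have h3 : ((n + 1).centralBinom : ℝ) = 2 * (2 * n + 1) * catalan n := by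
      have : (n : ℝ) + 1 ≠ 0 := by positivity
      apply mul_left_cancel₀ this
      rw [h2, ← h1]; ring
    rw [h3, ← h1, pow_succ]
    field_simp
    ring

/-- The Catalan series in `X/4` -/
noncomputable def catS : PowerSeries ℂ :=
  PowerSeries.rescale (1 / 4 : ℂ) (PowerSeries.map (Nat.castRingHom ℂ) PowerSeries.catalanSeries)

theorem absS_catS : AbsS catS := by
  refine summable_of_sum_range_le (c := 2) (fun _ => norm_nonneg _) fun n => ?_
  have : ∀ k, ‖PowerSeries.coeff k catS‖ = (catalan k : ℝ) / 4 ^ k := by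
    intro k
    simp [catS, PowerSeries.coeff_rescale]
    ring
  simp only [this]
  rw [catalan_partial]
  have : (0 : ℝ) ≤ 2 * (n.centralBinom : ℝ) / 4 ^ n := by positivity
  linarith

theorem catS_eq : catS ^ 2 * (PowerSeries.C (1 / 4 : ℂ) * PowerSeries.X) + 1 = catS := by
  have h := congrArg (fun F => PowerSeries.rescale (1 / 4 : ℂ)
    (PowerSeries.map (Nat.castRingHom ℂ) F)) PowerSeries.catalanSeries_sq_mul_X_add_one
  simp only [map_add, map_mul, map_pow, map_one, PowerSeries.map_X, PowerSeries.rescale_X] at h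
  exact h

/-- the square root of `1 - X` -/
noncomputable def sqS : PowerSeries ℂ :=
  ((1 : Polynomial ℂ) : PowerSeries ℂ) -
    ((Polynomial.C (1 / 2 : ℂ) * Polynomial.X : Polynomial ℂ) : PowerSeries ℂ) * catS

theorem absS_sqS : AbsS sqS := (absS_poly _).sub ((absS_poly _).mul absS_catS)

theorem sqS_sq : sqS * sqS = 1 - PowerSeries.X := by
  have h := catS_eq
  have e : (PowerSeries.C (1 / 4 : ℂ)) = PowerSeries.C (1 / 2 : ℂ) * PowerSeries.C (1 / 2 : ℂ) := by
    rw [← map_mul]; norm_num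
  have e2 : (2 : PowerSeries ℂ) * PowerSeries.C (1 / 2 : ℂ) = 1 := by
    have : (2 : PowerSeries ℂ) = PowerSeries.C (2 : ℂ) := (map_ofNat PowerSeries.C 2).symm
    rw [this, ← map_mul]; norm_num
  rw [e] at h
  simp only [sqS, Polynomial.coe_one, Polynomial.coe_mul, Polynomial.coe_C, Polynomial.coe_X]
  linear_combination (PowerSeries.X) * h - PowerSeries.X * catS * e2

theorem sqSb_sq (b : ℂ) : PowerSeries.rescale b sqS * PowerSeries.rescale b sqS =
    ((1 - Polynomial.C b * Polynomial.X : Polynomial ℂ) : PowerSeries ℂ) := by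
  rw [← map_mul, sqS_sq, map_sub, map_one, PowerSeries.rescale_X]
  simp [Polynomial.coe_sub]

/-- geometric series -/
noncomputable def geo (b : ℂ) : PowerSeries ℂ := PowerSeries.rescale b (PowerSeries.mk 1)

theorem geo_mul (b : ℂ) :
    geo b * ((1 - Polynomial.C b * Polynomial.X : Polynomial ℂ) : PowerSeries ℂ) = 1 := by
  have h := congrArg (PowerSeries.rescale b) (PowerSeries.mk_one_mul_one_sub_eq_one ℂ)
  rw [map_mul, map_sub, map_one, PowerSeries.rescale_X] at h
  simpa [geo, Polynomial.coe_sub] using h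

theorem absS_geo {b : ℂ} (hb : ‖b‖ < 1) : AbsS (geo b) := by
  unfold AbsS geo
  simp only [PowerSeries.coeff_rescale, PowerSeries.coeff_mk, Pi.one_apply, mul_one, norm_pow]
  exact summable_geometric_of_lt_one (norm_nonneg _) hb

/-- a polynomial that factors with equal moduli on the circle -/
def Good (f : Polynomial ℂ) : Prop := ∃ G H : PowerSeries ℂ, AbsS G ∧ AbsS H ∧
  (f : PowerSeries ℂ) = G * H ∧ ∀ w : ℂ, ‖w‖ = 1 → ‖ev G w‖ ^ 2 = ‖f.eval w‖ ∧
    ‖ev H w‖ ^ 2 = ‖f.eval w‖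

theorem Good.mul {f g : Polynomial ℂ} (hf : Good f) (hg : Good g) : Good (f * g) := by
  obtain ⟨G, H, hG, hH, e, h⟩ := hf
  obtain ⟨G', H', hG', hH', e', h'⟩ := hg
  refine ⟨G * G', H * H', hG.mul hG', hH.mul hH', ?_, fun w hw => ⟨?_, ?_⟩⟩
  · rw [Polynomial.coe_mul, e, e']; ring
  · rw [ev_mul hG hG' hw, norm_mul, mul_pow, (h w hw).1, (h' w hw).1, Polynomial.eval_mul, norm_mul]
  · rw [ev_mul hH hH' hw, norm_mul, mul_pow, (h w hw).2, (h' w hw).2, Polynomial.eval_mul, norm_mul]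

theorem good_sq {f : Polynomial ℂ} {G : PowerSeries ℂ} (hG : AbsS G)
    (e : G * G = (f : PowerSeries ℂ)) {w : ℂ} (hw : ‖w‖ = 1) : ‖ev G w‖ ^ 2 = ‖f.eval w‖ := by
  rw [← ev_poly, ← e, ev_mul hG hG hw, norm_mul, sq]

theorem good_C (c : ℂ) : Good (Polynomial.C c) := by
  obtain ⟨d, hd⟩ := IsAlgClosed.exists_pow_nat_eq c (n := 2) (by norm_num)
  have e : ((Polynomial.C d : Polynomial ℂ) : PowerSeries ℂ) * (Polynomial.C d : Polynomial ℂ)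
      = ((Polynomial.C c : Polynomial ℂ) : PowerSeries ℂ) := by
    rw [← Polynomial.coe_mul, ← Polynomial.C_mul, ← sq, hd]
  exact ⟨_, _, absS_poly _, absS_poly _, e.symm, fun w hw =>
    ⟨good_sq (absS_poly _) e hw, good_sq (absS_poly _) e hw⟩⟩

theorem good_one_sub {b : ℂ} (hb : ‖b‖ ≤ 1) : Good (1 - Polynomial.C b * Polynomial.X) :=
  ⟨_, _, absS_sqS.rescale hb, absS_sqS.rescale hb, (sqSb_sq b).symm, fun w hw =>
    ⟨good_sq (absS_sqS.rescale hb) (sqSb_sq b) hw, good_sq (absS_sqS.rescale hb) (sqSb_sq b) hw⟩⟩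

theorem good_X_sub (a : ℂ) : Good (Polynomial.X - Polynomial.C a) := by
  rcases lt_or_ge ‖a‖ 1 with ha | ha
  · set b : ℂ := (starRingEnd ℂ) a with hb
    have hb1 : ‖b‖ < 1 := by rw [hb, RCLike.norm_conj]; exact ha
    set V := PowerSeries.rescale b sqS with hV
    have hVa : AbsS V := absS_sqS.rescale hb1.le
    set U := ((Polynomial.X - Polynomial.C a : Polynomial ℂ) : PowerSeries ℂ) * (V * geo b) with hU
    have hUa : AbsS U := (absS_poly _).mul (hVa.mul (absS_geo hb1))
    have e : ((Polynomial.X - Polynomial.C a : Polynomial ℂ) : PowerSeries ℂ) = U * V := by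
      have h1 := sqSb_sq b
      have h2 := geo_mul b
      rw [← h1] at h2
      rw [hU]
      linear_combination -((Polynomial.X - Polynomial.C a : Polynomial ℂ) : PowerSeries ℂ) * h2
    have hv : ∀ w : ℂ, ‖w‖ = 1 →
        ‖ev V w‖ ^ 2 = ‖(Polynomial.X - Polynomial.C a : Polynomial ℂ).eval w‖ := by
      intro w hw
      rw [good_sq hVa (sqSb_sq b) hw]
      have hww : (starRingEnd ℂ) w * w = 1 := by
        rw [mul_comm, Complex.mul_conj, Complex.normSq_eq_norm_sq, hw]; simp
      have : (1 - Polynomial.C b * Polynomial.X : Polynomial ℂ).eval w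
          = (starRingEnd ℂ) (w - a) * w := by
        simp only [Polynomial.eval_sub, Polynomial.eval_one, Polynomial.eval_mul,
          Polynomial.eval_C, Polynomial.eval_X, map_sub, sub_mul, hww, hb]
      rw [this, norm_mul, RCLike.norm_conj, hw]
      simp
    refine ⟨U, V, hUa, hVa, e, fun w hw => ⟨?_, hv w hw⟩⟩
    have h1 := hv w hw
    have h2 : ‖(Polynomial.X - Polynomial.C a : Polynomial ℂ).eval w‖ = ‖ev U w‖ * ‖ev V w‖ := by
      rw [← ev_poly, e, ev_mul hUa hVa hw, norm_mul]
    have h3 : 0 < ‖(Polynomial.X - Polynomial.C a : Polynomial ℂ).eval w‖ := by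
      rw [norm_pos_iff]
      simp only [Polynomial.eval_sub, Polynomial.eval_X, Polynomial.eval_C]
      intro h
      rw [sub_eq_zero.1 h] at hw
      linarith
    rw [← h1] at h2 h3 ⊢
    have h4 : 0 < ‖ev V w‖ := by
      rcases (norm_nonneg (ev V w)).eq_or_lt with h | h
      · rw [← h] at h3; norm_num at h3
      · exact h
    have h5 : ‖ev V w‖ = ‖ev U w‖ := by
      apply mul_right_cancel₀ h4.ne'
      rw [← h2, sq]
    rw [h5]
  · have ha0 : a ≠ 0 := by rintro rfl; norm_num at ha
    have e : (Polynomial.X - Polynomial.C a : Polynomial ℂ)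
        = Polynomial.C (-a) * (1 - Polynomial.C a⁻¹ * Polynomial.X) := by
      have : (Polynomial.C a * Polynomial.C a⁻¹ : Polynomial ℂ) = 1 := by
        rw [← Polynomial.C_mul, mul_inv_cancel₀ ha0, Polynomial.C_1]
      rw [Polynomial.C_neg]
      linear_combination (-Polynomial.X) * this
    rw [e]
    refine (good_C _).mul (good_one_sub ?_)
    rw [norm_inv]
    exact inv_le_one_of_one_le₀ ha

theorem good_all (f : Polynomial ℂ) : Good f := by
  rw [(IsAlgClosed.splits f).eq_prod_roots]
  refine (good_C _).mul ?_
  induction f.roots using Multiset.induction with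
  | empty => simpa using good_C 1
  | cons a s ih =>
    rw [Multiset.map_cons, Multiset.prod_cons]
    exact (good_X_sub a).mul ih

theorem norm_e (θ : ℝ) : ‖Complex.exp (Complex.I * θ)‖ = 1 := by
  rw [mul_comm]; exact Complex.norm_exp_ofReal_mul_I θ

theorem cont_e : Continuous fun θ : ℝ => Complex.exp (Complex.I * θ) := by fun_prop

theorem orth (i j : ℕ) : ∫ θ in Set.Icc (0 : ℝ) (2 * π),
    Complex.exp (Complex.I * θ) ^ i * (starRingEnd ℂ) (Complex.exp (Complex.I * θ) ^ j)
      = if i = j then ((2 * π : ℝ) : ℂ) else 0 := by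
  have hpi : (0 : ℝ) ≤ 2 * π := by positivity
  rw [integral_Icc_eq_integral_Ioc, ← intervalIntegral.integral_of_le hpi]
  have e : ∀ θ : ℝ, Complex.exp (Complex.I * θ) ^ i *
      (starRingEnd ℂ) (Complex.exp (Complex.I * θ) ^ j)
      = Complex.exp ((((i : ℂ) - j) * Complex.I) * θ) := by
    intro θ
    rw [map_pow, ← Complex.exp_conj, ← Complex.exp_nat_mul, ← Complex.exp_nat_mul, ← Complex.exp_add]
    congr 1
    simp only [map_mul, Complex.conj_I, Complex.conj_ofReal]
    ring
  simp only [e]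
  split_ifs with h
  · subst h; simp
  · have hne : ((i : ℂ) - j) * Complex.I ≠ 0 := by
      refine mul_ne_zero (sub_ne_zero.2 ?_) Complex.I_ne_zero
      exact_mod_cast h
    rw [integral_exp_mul_complex hne]
    have : Complex.exp (((i : ℂ) - j) * Complex.I * ((2 * π : ℝ) : ℂ)) = 1 := by
      rw [Complex.exp_eq_one_iff]
      refine ⟨(i : ℤ) - j, ?_⟩
      push_cast; ring
    rw [this]; simp

theorem parseval (a : ℕ → ℂ) (n : ℕ) : ∫ θ in Set.Icc (0 : ℝ) (2 * π),
    ‖∑ k ∈ Finset.range n, a k * Complex.exp (Complex.I * θ) ^ k‖ ^ 2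
      = 2 * π * ∑ k ∈ Finset.range n, ‖a k‖ ^ 2 := by
  apply Complex.ofReal_injective
  rw [← integral_complex_ofReal]
  have e : ∀ θ : ℝ, ((‖∑ k ∈ Finset.range n, a k * Complex.exp (Complex.I * θ) ^ k‖ ^ 2 : ℝ) : ℂ)
      = ∑ i ∈ Finset.range n, ∑ j ∈ Finset.range n, (a i * (starRingEnd ℂ) (a j)) *
        (Complex.exp (Complex.I * θ) ^ i *
          (starRingEnd ℂ) (Complex.exp (Complex.I * θ) ^ j)) := by
    intro θ
    rw [← Complex.normSq_eq_norm_sq, ← Complex.mul_conj, map_sum, Finset.sum_mul_sum]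
    refine Finset.sum_congr rfl fun i _ => Finset.sum_congr rfl fun j _ => ?_
    rw [map_mul]; ring
  simp only [e]
  have hi : ∀ i j : ℕ, Integrable (fun θ : ℝ => (a i * (starRingEnd ℂ) (a j)) *
        (Complex.exp (Complex.I * θ) ^ i *
          (starRingEnd ℂ) (Complex.exp (Complex.I * θ) ^ j)))
        (volume.restrict (Set.Icc (0 : ℝ) (2 * π))) := by
    intro i j
    refine Continuous.integrableOn_Icc ?_
    have := Complex.continuous_conj
    exact continuous_const.mul ((cont_e.pow i).mul (this.comp (cont_e.pow j)))
  rw [integral_finsetSum _ fun i _ => integrable_finsetSum _ fun j _ => hi i j]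
  rw [Complex.ofReal_mul, Complex.ofReal_sum, Finset.mul_sum]
  refine Finset.sum_congr rfl fun i hin => ?_
  rw [integral_finsetSum _ fun j _ => hi i j]
  simp only [integral_const_mul, orth]
  simp only [mul_ite, mul_zero, Finset.sum_ite_eq, hin, if_true]
  rw [Complex.mul_conj, Complex.normSq_eq_norm_sq, mul_comm]

theorem bessel {G : PowerSeries ℂ} (hG : AbsS G) (n : ℕ) :
    2 * π * ∑ k ∈ Finset.range n, ‖PowerSeries.coeff k G‖ ^ 2
      ≤ ∫ θ in Set.Icc (0 : ℝ) (2 * π), ‖ev G (Complex.exp (Complex.I * θ))‖ ^ 2 := by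
  have ht : Filter.Tendsto (fun n => ∫ θ in Set.Icc (0 : ℝ) (2 * π),
      ‖∑ k ∈ Finset.range n, PowerSeries.coeff k G * Complex.exp (Complex.I * θ) ^ k‖ ^ 2)
      Filter.atTop (nhds (∫ θ in Set.Icc (0 : ℝ) (2 * π),
        ‖ev G (Complex.exp (Complex.I * θ))‖ ^ 2)) := by
    refine tendsto_integral_of_dominated_convergence
      (fun _ => (∑' k, ‖PowerSeries.coeff k G‖) ^ 2) (fun n => ?_) (integrable_const _)
      (fun n => ?_) ?_
    · refine Continuous.aestronglyMeasurable ?_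
      fun_prop
    · refine Filter.Eventually.of_forall fun θ => ?_
      rw [norm_pow, norm_norm]
      refine pow_le_pow_left₀ (norm_nonneg _) ?_ 2
      refine (norm_sum_le _ _).trans ?_
      simp only [norm_mul, norm_pow, norm_e, one_pow, mul_one]
      exact Summable.sum_le_tsum _ (fun _ _ => norm_nonneg _) hG
    · refine Filter.Eventually.of_forall fun θ => ?_
      exact ((hG.sum (norm_e θ)).of_norm.hasSum.tendsto_sum_nat.norm).pow 2
  simp only [parseval] at ht
  refine Monotone.ge_of_tendsto (f := fun n =>
    2 * π * ∑ k ∈ Finset.range n, ‖PowerSeries.coeff k G‖ ^ 2) ?_ ht n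
  intro p q hpq
  refine mul_le_mul_of_nonneg_left ?_ (by positivity)
  exact Finset.sum_le_sum_of_subset_of_nonneg (Finset.range_mono hpq) fun _ _ _ => by positivity

theorem conv_bound (g h a : ℕ → ℂ) (ha : ∀ k, a k = ∑ x ∈ Finset.HasAntidiagonal.antidiagonal k, g x.1 * h x.2)
    (n : ℕ) : ∑ k ∈ Finset.range n, ‖a k‖ ^ 2 / 2 ^ k ≤
      (∑ k ∈ Finset.range n, ‖g k‖ ^ 2) * ∑ k ∈ Finset.range n, ‖h k‖ ^ 2 := by
  have h1 : ∀ k, ‖a k‖ ^ 2 / 2 ^ k ≤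
      ∑ x ∈ Finset.HasAntidiagonal.antidiagonal k, ‖g x.1‖ ^ 2 * ‖h x.2‖ ^ 2 := by
    intro k
    rw [div_le_iff₀ (by positivity)]
    have h2 : ‖a k‖ ≤ ∑ x ∈ Finset.HasAntidiagonal.antidiagonal k, ‖g x.1‖ * ‖h x.2‖ := by
      rw [ha]
      refine (norm_sum_le _ _).trans (le_of_eq ?_)
      simp only [norm_mul]
    have h3 : ((k : ℝ) + 1) ≤ 2 ^ k := by
      exact_mod_cast Nat.lt_two_pow_self (n := k)
    calc ‖a k‖ ^ 2 ≤ (∑ x ∈ Finset.HasAntidiagonal.antidiagonal k, ‖g x.1‖ * ‖h x.2‖) ^ 2 :=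
          pow_le_pow_left₀ (norm_nonneg _) h2 2
      _ ≤ (#(Finset.HasAntidiagonal.antidiagonal k) : ℝ) *
            ∑ x ∈ Finset.HasAntidiagonal.antidiagonal k, (‖g x.1‖ * ‖h x.2‖) ^ 2 := sq_sum_le_card_mul_sum_sq
      _ = ((k : ℝ) + 1) * ∑ x ∈ Finset.HasAntidiagonal.antidiagonal k, ‖g x.1‖ ^ 2 * ‖h x.2‖ ^ 2 := by
          simp only [mul_pow, Finset.Nat.card_antidiagonal]; push_cast; rfl
      _ ≤ 2 ^ k * ∑ x ∈ Finset.HasAntidiagonal.antidiagonal k, ‖g x.1‖ ^ 2 * ‖h x.2‖ ^ 2 :=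
          mul_le_mul_of_nonneg_right h3 (Finset.sum_nonneg fun _ _ => by positivity)
      _ = _ := mul_comm _ _
  refine (Finset.sum_le_sum fun k _ => h1 k).trans ?_
  rw [Finset.sum_mul_sum, ← Finset.sum_product', Finset.sum_sigma']
  rw [← Finset.sum_image (f := fun x : ℕ × ℕ => ‖g x.1‖ ^ 2 * ‖h x.2‖ ^ 2)
    (g := fun y : (_ : ℕ) × (ℕ × ℕ) => y.2)]
  · refine Finset.sum_le_sum_of_subset_of_nonneg ?_ fun _ _ _ => by positivity
    intro x hx
    simp only [Finset.mem_image, Finset.mem_sigma, Finset.mem_range,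
      Finset.HasAntidiagonal.mem_antidiagonal] at hx
    obtain ⟨⟨k, y⟩, ⟨h1, h2⟩, rfl⟩ := hx
    simp only at h1 h2
    simp only [Finset.mem_product, Finset.mem_range]
    omega
  · rintro ⟨k, y⟩ hy ⟨k', y'⟩ hy' hh
    simp only [Finset.coe_sigma, Set.mem_sigma_iff, Finset.mem_coe,
      Finset.HasAntidiagonal.mem_antidiagonal] at hy hy' hh
    subst hh
    obtain rfl : k = k' := hy.2.symm.trans hy'.2
    rfl

theorem one_dim (f : Polynomial ℂ) (n : ℕ) :
    2 * π * √(∑ k ∈ Finset.range n, ‖f.coeff k‖ ^ 2 / 2 ^ k) ≤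
      ∫ θ in Set.Icc (0 : ℝ) (2 * π), ‖f.eval (Complex.exp (Complex.I * θ))‖ := by
  obtain ⟨G, H, hG, hH, e, h⟩ := good_all f
  have bG := bessel hG n
  have bH := bessel hH n
  simp only [fun θ => (h _ (norm_e θ)).1] at bG
  simp only [fun θ => (h _ (norm_e θ)).2] at bH
  have hc := conv_bound (fun k => PowerSeries.coeff k G) (fun k => PowerSeries.coeff k H)
    (fun k => f.coeff k) (fun k => by rw [← Polynomial.coeff_coe, e, PowerSeries.coeff_mul]) n
  set J := ∫ θ in Set.Icc (0 : ℝ) (2 * π), ‖f.eval (Complex.exp (Complex.I * θ))‖ with hJ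
  have hJ0 : 0 ≤ J := integral_nonneg fun _ => norm_nonneg _
  have hp : 0 < 2 * π := by positivity
  rw [← le_div_iff₀' hp] at bG bH ⊢
  refine Real.sqrt_le_iff.2 ⟨by positivity, hc.trans ?_⟩
  rw [sq]
  exact mul_le_mul bG bH (Finset.sum_nonneg fun _ _ => by positivity) (by positivity)

/-- the polynomial attached to a family of coefficients -/
noncomputable def pol {M N : ℕ} (c : (Fin N → Fin M) → ℂ) (θ : Fin N → ℝ) : ℂ :=
  ∑ α, c α * ∏ j, Complex.exp (Complex.I * θ j) ^ (α j : ℕ)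

/-- the measure on the torus -/
noncomputable def tor (N : ℕ) : Measure (Fin N → ℝ) :=
  Measure.pi fun _ => volume.restrict (Set.Icc (0 : ℝ) (2 * π))

theorem tor_eq (N : ℕ) :
    tor N = volume.restrict (Set.univ.pi fun _ => Set.Icc (0 : ℝ) (2 * π)) := by
  rw [tor, volume_pi, Measure.restrict_pi_pi]

instance (N : ℕ) : IsFiniteMeasure (tor N) := by unfold tor; infer_instance

theorem cont_pol {M N : ℕ} (c : (Fin N → Fin M) → ℂ) : Continuous (pol c) := by
  unfold pol; fun_prop

theorem integrable_tor {E : Type*} [NormedAddCommGroup E] {N : ℕ} {F : (Fin N → ℝ) → E}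
    (hF : Continuous F) : Integrable F (tor N) := by
  rw [tor_eq]
  exact hF.continuousOn.integrableOn_compact (isCompact_univ_pi fun _ => isCompact_Icc)

theorem pol_cons {M N : ℕ} (c : (Fin (N + 1) → Fin M) → ℂ) (t : ℝ) (θ : Fin N → ℝ) :
    pol c (Fin.cons t θ) = ∑ k : Fin M, pol (fun α => c (Fin.cons k α)) θ *
      Complex.exp (Complex.I * t) ^ (k : ℕ) := by
  unfold pol
  rw [← (Fin.consEquiv (fun _ => Fin M)).sum_comp, Fintype.sum_prod_type]
  refine Finset.sum_congr rfl fun k _ => ?_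
  rw [Finset.sum_mul]
  refine Finset.sum_congr rfl fun α _ => ?_
  change c (Fin.cons k α) * _ = _
  simp only [Fin.consEquiv_apply, Fin.prod_univ_succ, Fin.cons_zero, Fin.cons_succ]
  ring

theorem integral_tor_succ {N : ℕ} {F : (Fin (N + 1) → ℝ) → ℝ} (hF : Continuous F) :
    ∫ θ, F θ ∂(tor (N + 1)) =
      ∫ θ, (∫ t in Set.Icc (0 : ℝ) (2 * π), F (Fin.cons t θ)) ∂(tor N) := by
  have hmp := measurePreserving_piFinSuccAbove
    (fun _ : Fin (N + 1) => volume.restrict (Set.Icc (0 : ℝ) (2 * π))) 0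
  have h1 := hmp.symm.integral_comp' (g := F)
  have h2 := hmp.symm.integrable_comp_emb (g := F)
    (MeasurableEquiv.measurableEmbedding _)
  have h3 := h2.2 (integrable_tor hF)
  change ∫ θ, F θ ∂(Measure.pi _) = _
  rw [← h1]
  refine (integral_prod_symm _ h3).trans ?_
  refine integral_congr_ae (Filter.Eventually.of_forall fun θ => ?_)
  refine integral_congr_ae (Filter.Eventually.of_forall fun t => ?_)
  simp [MeasurableEquiv.piFinSuccAbove, Fin.insertNthEquiv]

theorem one_dim' {M : ℕ} (a : Fin M → ℂ) :
    2 * π * √(∑ k : Fin M, ‖a k‖ ^ 2 / 2 ^ (k : ℕ)) ≤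
      ∫ t in Set.Icc (0 : ℝ) (2 * π), ‖∑ k : Fin M, a k * Complex.exp (Complex.I * t) ^ (k : ℕ)‖ := by
  set f : Polynomial ℂ := ∑ k : Fin M, Polynomial.monomial (k : ℕ) (a k) with hf
  have h := one_dim f M
  have e1 : ∀ w : ℂ, f.eval w = ∑ k : Fin M, a k * w ^ (k : ℕ) := by
    intro w
    simp [hf, Polynomial.eval_finsetSum, Polynomial.eval_monomial]
  have e2 : ∀ k : Fin M, f.coeff (k : ℕ) = a k := by
    intro k
    simp [hf, Polynomial.coeff_monomial, Fin.val_inj]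
  rw [Finset.sum_range] at h
  simpa only [e1, e2] using h

theorem minkowski {M N : ℕ} (F : Fin M → (Fin N → ℝ) → ℝ) (hF : ∀ k, Continuous (F k)) :
    √(∑ k, (∫ θ, F k θ ∂(tor N)) ^ 2) ≤ ∫ θ, √(∑ k, F k θ ^ 2) ∂(tor N) := by
  have h := norm_integral_le_integral_norm (μ := tor N)
    (fun θ => (WithLp.toLp 2 (fun k => F k θ) : EuclideanSpace ℝ (Fin M)))
  have e := eval_integral_piLp (μ := tor N) (q := 2)
    (f := fun θ => (WithLp.toLp 2 (fun k => F k θ) : EuclideanSpace ℝ (Fin M)))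
    (fun k => integrable_tor (hF k))
  rw [EuclideanSpace.norm_eq] at h
  simp only [EuclideanSpace.norm_eq, Real.norm_eq_abs, sq_abs] at h
  simp only [e] at h
  exact h

theorem multi {M : ℕ} (N : ℕ) : ∀ c : (Fin N → Fin M) → ℂ,
    (2 * π) ^ N * √(∑ α, ‖c α‖ ^ 2 / 2 ^ (∑ j, (α j : ℕ))) ≤ ∫ θ, ‖pol c θ‖ ∂(tor N) := by
  induction N with
  | zero =>
    intro c
    have : tor 0 = Measure.dirac default := by
      rw [tor]; exact Measure.pi_of_empty _ _
    rw [this, integral_dirac]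
    simp [pol]
  | succ N ih =>
    intro c
    set ck : Fin M → (Fin N → Fin M) → ℂ := fun k α => c (Fin.cons k α) with hck
    set L : Fin M → ℝ := fun k => ∑ α, ‖ck k α‖ ^ 2 / 2 ^ (∑ j, (α j : ℕ)) with hL
    have hL0 : ∀ k, 0 ≤ L k := fun k => Finset.sum_nonneg fun _ _ => by positivity
    have e : ∑ α, ‖c α‖ ^ 2 / 2 ^ (∑ j, (α j : ℕ)) = ∑ k : Fin M, L k / 2 ^ (k : ℕ) := by
      rw [← (Fin.consEquiv (fun _ => Fin M)).sum_comp, Fintype.sum_prod_type]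
      refine Finset.sum_congr rfl fun k _ => ?_
      rw [hL, Finset.sum_div]
      refine Finset.sum_congr rfl fun α _ => ?_
      simp only [Fin.consEquiv_apply, Fin.sum_univ_succ, Fin.cons_zero, Fin.cons_succ, hck]
      rw [pow_add, div_div, mul_comm (2 ^ (k : ℕ))]
      rfl
    have hs : ∀ (k : Fin M), (√(2 ^ (k : ℕ)) : ℝ) ^ 2 = 2 ^ (k : ℕ) := fun k =>
      Real.sq_sqrt (by positivity)
    have hF : ∀ k : Fin M, Continuous fun θ => ‖pol (ck k) θ‖ / √(2 ^ (k : ℕ)) := fun k =>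
      (cont_pol _).norm.div_const _
    have h1 : (2 * π) ^ N * √(∑ k : Fin M, L k / 2 ^ (k : ℕ)) ≤
        √(∑ k : Fin M, (∫ θ, ‖pol (ck k) θ‖ / √(2 ^ (k : ℕ)) ∂(tor N)) ^ 2) := by
      have hp : (0 : ℝ) ≤ (2 * π) ^ N := by positivity
      rw [← Real.sqrt_sq hp, ← Real.sqrt_mul (by positivity), Finset.mul_sum]
      refine Real.sqrt_le_sqrt (Finset.sum_le_sum fun k _ => ?_)
      rw [integral_div, div_pow, hs, mul_div_assoc']
      refine div_le_div_of_nonneg_right ?_ (by positivity)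
      have := pow_le_pow_left₀ (by positivity) (ih (ck k)) 2
      rwa [mul_pow, Real.sq_sqrt (hL0 k)] at this
    have h2 := h1.trans (minkowski _ hF)
    rw [e, pow_succ', mul_assoc]
    refine (mul_le_mul_of_nonneg_left h2 (by positivity)).trans ?_
    rw [integral_tor_succ (cont_pol c).norm, ← integral_const_mul]
    have hJ : Continuous fun θ : Fin N → ℝ =>
        ∫ t in Set.Icc (0 : ℝ) (2 * π), ‖pol c (Fin.cons t θ)‖ := by
      refine continuous_parametric_integral_of_continuous ?_ isCompact_Icc
      refine (cont_pol c).norm.comp ?_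
      exact Continuous.finCons continuous_snd continuous_fst
    refine integral_mono (integrable_tor ?_) (integrable_tor hJ) fun θ => ?_
    · have := fun k => hF k
      fun_prop
    · simp only [div_pow, hs, pol_cons]
      exact one_dim' fun k => pol (ck k) θ

theorem sum_tuple {E : Type*} [AddCommMonoid E] (N m : ℕ) (g : (Fin N → ℕ) → E) :
    ∑ α ∈ Finset.Nat.antidiagonalTuple N m, g α =
      ∑ a : Fin N → Fin (m + 1), if ∑ j, (a j : ℕ) = m then g (fun j => a j) else 0 := by
  rw [← Finset.sum_filter]
  symm
  refine Finset.sum_bij (fun a _ j => (a j : ℕ)) ?_ ?_ ?_ ?_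
  · intro a ha
    rw [Finset.Nat.mem_antidiagonalTuple]
    exact (Finset.mem_filter.1 ha).2
  · intro a _ b _ h
    funext j
    exact Fin.ext (congrFun h j)
  · intro α hα
    rw [Finset.Nat.mem_antidiagonalTuple] at hα
    have hle : ∀ j, α j < m + 1 := fun j => by
      have := Finset.single_le_sum (f := α) (fun _ _ => Nat.zero_le _) (Finset.mem_univ j)
      omega
    exact ⟨fun j => ⟨α j, hle j⟩, by simpa using hα, rfl⟩
  · intro a _
    rfl

end Bayart



/-- **Bayart's inequality.** For an `m`-homogeneous polynomial
`P(z) = ∑_{|α|=m} c_α z^α` in `N` complex variables,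
`(∑_{|α|=m} |c_α|²)^{1/2} ≤ 2^{m/2} ∫_{𝕋^N} |∑_{|α|=m} c_α w^α| dσ(w)`,
the torus `𝕋^N` being parametrized by `w_j = e^{iθ_j}`, `θ ∈ [0,2π]^N`, with
normalized Haar measure `dσ = dθ/(2π)^N`. -/
theorem bayart_inequality (m N : ℕ) (hm : 1 ≤ m) (hN : 1 ≤ N)
    (c : (Fin N → ℕ) → ℂ) :
    Real.sqrt (∑ α ∈ Finset.Nat.antidiagonalTuple N m, ‖c α‖ ^ 2)
      ≤ 2 ^ ((m : ℝ) / 2) *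
        ((1 / (2 * π) ^ N) *
          ∫ θ : Fin N → ℝ in Set.univ.pi fun _ => Set.Icc 0 (2 * π),
            ‖∑ α ∈ Finset.Nat.antidiagonalTuple N m,
              c α * ∏ j, Complex.exp (Complex.I * θ j) ^ α j‖) := by
  have h := Bayart.multi N (M := m + 1) fun a =>
    if ∑ j, (a j : ℕ) = m then c (fun j => a j) else 0
  have e1 : ∑ a : Fin N → Fin (m + 1),
      ‖(if ∑ j, (a j : ℕ) = m then c (fun j => a j) else 0 : ℂ)‖ ^ 2 / 2 ^ (∑ j, (a j : ℕ))
      = (∑ α ∈ Finset.Nat.antidiagonalTuple N m, ‖c α‖ ^ 2) / 2 ^ m := by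
    rw [Bayart.sum_tuple, Finset.sum_div]
    refine Finset.sum_congr rfl fun a _ => ?_
    split_ifs with h
    · rw [h]
    · simp
  have e2 : ∀ θ : Fin N → ℝ, Bayart.pol (M := m + 1)
      (fun a => if ∑ j, (a j : ℕ) = m then c (fun j => a j) else 0) θ
      = ∑ α ∈ Finset.Nat.antidiagonalTuple N m,
              c α * ∏ j, Complex.exp (Complex.I * θ j) ^ α j := by
    intro θ
    rw [Bayart.sum_tuple, Bayart.pol]
    refine Finset.sum_congr rfl fun a _ => ?_
    split_ifs with h
    · rfl
    · simp
  rw [e1] at h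
  simp only [e2, Bayart.tor_eq] at h
  have hp : (0 : ℝ) < (2 * π) ^ N := by positivity
  have e3 : (2 : ℝ) ^ ((m : ℝ) / 2) = √(2 ^ m) := by
    rw [Real.sqrt_eq_rpow, ← Real.rpow_natCast, ← Real.rpow_mul (by norm_num)]
    congr 1; ring
  have hs : (0 : ℝ) < √(2 ^ m) := by positivity
  rw [e3, one_div_mul_eq_div]
  rw [Real.sqrt_div' _ (by positivity)] at h
  rw [← div_le_iff₀' hs, le_div_iff₀' hp]
  exact h
end

section
/- (Blei's inequality.) Let m ≥ 2, N ≥ 1, and let (b_𝐢)_{𝐢 ∈ M(m,N)} be a family of complex numbers indexed by M(m,N) = {1,…,N}^m. Then (∑_{𝐢 ∈ M(m,N)} |b_𝐢|^{2m/(m+1)})^{(m+1)/(2m)} ≤ ∏_{k=1}^m ( ∑_{j=1}^N ( ∑_{𝐢 ∈ M(m-1,N)} |b_{(𝐢,_k j)}|² )^{1/2} )^{1/m}. -/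
open Finset

/-- Hölder's inequality for a finite family of functions. -/
lemma holder_multi {ι κ : Type*} [Fintype ι] [Fintype κ] (w : ℝ) (hw : 0 < w)
    (hw1 : ∑ _k : κ, w = 1) (f : κ → ι → ℝ) (hf : ∀ k i, 0 ≤ f k i) :
    ∑ i, ∏ k, f k i ^ w ≤ ∏ k, (∑ i, f k i) ^ w := by
  have hF : ∀ k, 0 ≤ ∑ i, f k i := fun k => sum_nonneg fun i _ => hf k i
  by_cases h : ∃ k, ∑ i, f k i = 0
  · obtain ⟨k, hk⟩ := h
    have h0 : ∀ i, f k i = 0 := fun i =>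
      (sum_eq_zero_iff_of_nonneg (fun i _ => hf k i)).1 hk i (mem_univ i)
    refine le_trans (le_of_eq ?_) (prod_nonneg fun k _ => Real.rpow_nonneg (hF k) w)
    refine sum_eq_zero fun i _ => prod_eq_zero (mem_univ k) ?_
    rw [h0, Real.zero_rpow hw.ne']
  · push Not at h
    have key : ∀ i, ∏ k, f k i ^ w ≤
        (∏ k, (∑ i, f k i) ^ w) * ∑ k, w * (f k i / ∑ i, f k i) := by
      intro i
      have h1 := Real.geom_mean_le_arith_mean_weighted univ (fun _ : κ => w)
        (fun k => f k i / ∑ i, f k i) (fun _ _ => hw.le) hw1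
        (fun k _ => div_nonneg (hf k i) (hF k))
      refine le_trans (le_of_eq ?_)
        (mul_le_mul_of_nonneg_left h1 (prod_nonneg fun k _ => Real.rpow_nonneg (hF k) w))
      rw [← prod_mul_distrib]
      refine prod_congr rfl fun k _ => ?_
      rw [← Real.mul_rpow (hF k) (div_nonneg (hf k i) (hF k)), mul_div_cancel₀ _ (h k)]
    refine (sum_le_sum fun i _ => key i).trans (le_of_eq ?_)
    rw [← mul_sum, sum_comm]
    have : ∀ k, ∑ i, w * (f k i / ∑ i, f k i) = w := by
      intro k
      rw [← mul_sum, ← sum_div, div_self (h k), mul_one]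
    rw [sum_congr rfl fun k _ => this k, hw1, mul_one]



/-- **Blei's inequality.** For `m = n+1 ≥ 2` and a family `(b_𝐢)` of complex numbers
indexed by `𝐢 ∈ M(m,N) = {1,…,N}^m`:
`(∑_𝐢 |b_𝐢|^{2m/(m+1)})^{(m+1)/(2m)}
  ≤ ∏_{k=1}^m (∑_{j=1}^N (∑_{𝐢 ∈ M(m-1,N)} |b_{(𝐢,_k j)}|²)^{1/2})^{1/m}`,
where `(𝐢,_k j)` inserts `j` in the `k`-th position of `𝐢`. -/
theorem blei_inequality (n N : ℕ) (hn : 1 ≤ n) (hN : 1 ≤ N)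
    (b : (Fin (n + 1) → Fin N) → ℂ) :
    (∑ i : Fin (n + 1) → Fin N,
        ‖b i‖ ^ ((2 * ((n : ℝ) + 1)) / ((n : ℝ) + 2)))
        ^ (((n : ℝ) + 2) / (2 * ((n : ℝ) + 1)))
      ≤ ∏ k : Fin (n + 1),
          (∑ j : Fin N, Real.sqrt (∑ i : Fin n → Fin N,
              ‖b (Fin.insertNth k j i)‖ ^ 2)) ^ (1 / ((n : ℝ) + 1)) := by

  set r : Fin (n + 1) → Fin N → ℝ := fun k j =>
    Real.sqrt (∑ i : Fin n → Fin N, ‖b (Fin.insertNth k j i)‖ ^ 2) with hr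
  have hr0 : ∀ k j, 0 ≤ r k j := fun k j => Real.sqrt_nonneg _
  have hS0 : ∀ k, 0 ≤ ∑ j, r k j := fun k => sum_nonneg fun j _ => hr0 k j
  have hrsq : ∀ k j, ∑ i : Fin n → Fin N, ‖b (Fin.insertNth k j i)‖ ^ 2 = r k j ^ 2 :=
    fun k j => (Real.sq_sqrt (sum_nonneg fun i _ => by positivity)).symm
  have hle : ∀ k (i : Fin (n + 1) → Fin N), ‖b i‖ ^ 2 ≤ r k (i k) ^ 2 := by
    intro k i
    rw [← hrsq]
    have := single_le_sum (f := fun x : Fin n → Fin N => ‖b (Fin.insertNth k (i k) x)‖ ^ 2)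
      (fun x _ => by positivity) (mem_univ (k.removeNth i))
    simpa using this
  have hn2 : (0 : ℝ) < (n : ℝ) + 2 := by positivity
  have hn1 : (0 : ℝ) < (n : ℝ) + 1 := by positivity
  have hw : (0 : ℝ) < 1 / ((n : ℝ) + 2) := by positivity
  have hsumk : ∀ k, ∑ i : Fin (n + 1) → Fin N, ‖b i‖ ^ 2 / r k (i k) = ∑ j, r k j := by
    intro k
    rw [← (Fin.insertNthEquiv (fun _ => Fin N) k).sum_comp, Fintype.sum_prod_type]
    refine sum_congr rfl fun j _ => ?_
    simp only [Fin.insertNthEquiv_apply, Fin.insertNth_apply_same]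
    rw [← sum_div]
    have e : ∑ i : Fin n → Fin N, ‖b ((Fin.insertNthEquiv (fun _ => Fin N) k) (j, i))‖ ^ 2
        = r k j ^ 2 := hrsq k j
    rw [e]
    rcases eq_or_ne (r k j) 0 with h | h
    · simp [h]
    · field_simp
  have hprod : ∑ i : Fin (n + 1) → Fin N, ∏ k, r k (i k) = ∏ k, ∑ j, r k j :=
    (Fintype.prod_sum r).symm
  let f : Option (Fin (n + 1)) → (Fin (n + 1) → Fin N) → ℝ := fun o i =>
    o.elim (∏ k, r k (i k)) (fun k => ‖b i‖ ^ 2 / r k (i k))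
  have hol := holder_multi (1 / ((n : ℝ) + 2)) hw
    (by simp only [sum_const, card_univ, Fintype.card_option, Fintype.card_fin, nsmul_eq_mul]
        push_cast
        field_simp
        ring) f (by
      rintro (_ | k) i
      · exact prod_nonneg fun k _ => hr0 _ _
      · exact div_nonneg (by positivity) (hr0 _ _))
  simp only [Fintype.prod_option, f, Option.elim_none, Option.elim_some, hsumk, hprod] at hol
  have hpt : ∀ i : Fin (n + 1) → Fin N,
      ‖b i‖ ^ ((2 * ((n : ℝ) + 1)) / ((n : ℝ) + 2)) ≤
      (∏ k, r k (i k)) ^ (1 / ((n : ℝ) + 2)) *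
        ∏ k, (‖b i‖ ^ 2 / r k (i k)) ^ (1 / ((n : ℝ) + 2)) := by
    intro i
    have hnn : ∀ k ∈ (univ : Finset (Fin (n + 1))), 0 ≤ ‖b i‖ ^ 2 / r k (i k) :=
      fun k _ => div_nonneg (by positivity) (hr0 _ _)
    have hpn : 0 ≤ ∏ k, r k (i k) := prod_nonneg fun k _ => hr0 _ _
    rcases eq_or_ne (‖b i‖) 0 with h | h
    · have hz : ‖b i‖ ^ ((2 * ((n : ℝ) + 1)) / ((n : ℝ) + 2)) = 0 := by
        rw [h, Real.zero_rpow (by positivity)]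
      rw [hz]
      exact mul_nonneg (Real.rpow_nonneg hpn _)
        (prod_nonneg fun k hk => Real.rpow_nonneg (hnn k hk) _)
    · refine le_of_eq ?_
      have hne : ∀ k, r k (i k) ≠ 0 := by
        intro k h0
        have := hle k i
        rw [h0] at this
        have h2 : 0 < ‖b i‖ ^ 2 := by positivity
        norm_num at this
        exact h (by simp [this])
      rw [Real.finsetProd_rpow _ _ hnn, ← Real.mul_rpow hpn (prod_nonneg hnn),
        ← prod_mul_distrib, prod_congr rfl fun k _ => mul_div_cancel₀ (‖b i‖ ^ 2) (hne k)]
      simp only [prod_const, card_univ, Fintype.card_fin]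
      rw [← pow_mul, ← Real.rpow_natCast, ← Real.rpow_mul (norm_nonneg _)]
      congr 1
      push_cast
      ring
  have hP : 0 ≤ ∏ k, ∑ j, r k j := prod_nonneg fun k _ => hS0 k
  rw [Real.finsetProd_rpow _ _ fun k _ => hS0 k] at hol ⊢
  have h3 := (sum_le_sum fun i _ => hpt i).trans hol
  rw [← Real.rpow_add_of_nonneg hP hw.le hw.le] at h3
  refine (Real.rpow_le_rpow (sum_nonneg fun i _ => by positivity) h3 (by positivity)).trans
    (le_of_eq ?_)
  rw [← Real.rpow_mul hP]
  congr 1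
  field_simp
  ring
end

section
/- (Subexponential Bohnenblust–Hille constants.) For every ε > 0 there exists κ > 0 such that for all m, N ≥ 1 and every m-homogeneous polynomial P(z) = ∑_{|α|=m} c_α z^α in N complex variables, (∑_{|α|=m} |c_α|^{2m/(m+1)})^{(m+1)/(2m)} ≤ κ (1+ε)^m · sup_{z ∈ closed unit polydisc of ℂ^N} |P(z)|. -/
open Finset

namespace BH
open scoped NNReal

lemma holder2 {ι : Type*} (S : Finset ι) (a b : ι → ℝ≥0) {s t : ℝ} (hs : 0 ≤ s) (ht : 0 ≤ t)
    (hst : s + t = 1) :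
    ∑ i ∈ S, a i ^ s * b i ^ t ≤ (∑ i ∈ S, a i) ^ s * (∑ i ∈ S, b i) ^ t := by
  rcases hs.eq_or_lt with rfl | hs
  · have : t = 1 := by linarith
    subst this; simp
  rcases ht.eq_or_lt with rfl | ht
  · have : s = 1 := by linarith
    subst this; simp
  have hpq : Real.HolderConjugate s⁻¹ t⁻¹ := by
    rw [Real.holderConjugate_iff]
    refine ⟨(one_lt_inv₀ hs).2 (by linarith), by simpa using hst⟩
  have h := NNReal.inner_le_Lp_mul_Lq S (fun i => a i ^ s) (fun i => b i ^ t) hpq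
  simpa [← NNReal.rpow_mul, hs.ne', ht.ne'] using h

lemma holder3 {ι : Type*} (S : Finset ι) (a b c : ι → ℝ≥0) {s t u : ℝ} (hs : 0 ≤ s) (ht : 0 ≤ t)
    (hu : 0 ≤ u) (hst : s + t + u = 1) :
    ∑ i ∈ S, a i ^ s * b i ^ t * c i ^ u ≤
      (∑ i ∈ S, a i) ^ s * (∑ i ∈ S, b i) ^ t * (∑ i ∈ S, c i) ^ u := by
  rcases (add_nonneg hs ht).eq_or_lt with h0 | h0
  · have h1 : s = 0 := by linarith
    have h2 : t = 0 := by linarith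
    have h3 : u = 1 := by linarith
    subst h1 h2 h3; simp
  have h1 := holder2 S (fun i => a i ^ (s / (s+t)) * b i ^ (t/(s+t))) c h0.le hu hst
  have h2 := holder2 S a b (s := s / (s+t)) (t := t/(s+t)) (by positivity) (by positivity)
    (by field_simp)
  have e1 : s / (s+t) * (s+t) = s := by field_simp
  have e2 : t / (s+t) * (s+t) = t := by field_simp
  simp only [NNReal.mul_rpow, ← NNReal.rpow_mul, e1, e2] at h1
  refine h1.trans ?_
  gcongr
  have h3 := NNReal.rpow_le_rpow h2 h0.le
  simpa only [NNReal.mul_rpow, ← NNReal.rpow_mul, e1, e2] using h3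

lemma mink {ι κ : Type*} (S : Finset ι) (T : Finset κ) (f : ι → κ → ℝ≥0) {q : ℝ} (hq : 1 ≤ q) :
    (∑ i ∈ S, (∑ j ∈ T, f i j) ^ q) ^ (1 / q) ≤ ∑ j ∈ T, (∑ i ∈ S, f i j ^ q) ^ (1 / q) := by
  classical
  have hq0 : q ≠ 0 := by positivity
  induction T using Finset.induction_on with
  | empty => simp [hq0]
  | insert j T hj ih =>
    simp only [Finset.sum_insert hj]
    refine (NNReal.Lp_add_le S _ _ hq).trans ?_
    gcongr

/-- multi-indices -/
abbrev MI (N : ℕ) := Fin N → ℕ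

noncomputable def U {N : ℕ} (p : ℝ) (F : MI N → ℝ≥0) : MI N → ℝ≥0 :=
  fun β => (∑ x, F (β + Pi.single x 1) ^ p) ^ (1 / p)

variable {N : ℕ}

lemma U_mono {p : ℝ} (hp : 0 < p) {F G : MI N → ℝ≥0} (h : F ≤ G) : U p F ≤ U p G := by
  intro β
  unfold U
  gcongr
  exact h _

lemma U_iter_mono {p : ℝ} (hp : 0 < p) (n : ℕ) {F G : MI N → ℝ≥0} (h : F ≤ G) :
    (U p)^[n] F ≤ (U p)^[n] G := by
  induction n with
  | zero => simpa
  | succ n ih => simp only [Function.iterate_succ_apply']; exact U_mono hp ih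

lemma U_comm {p : ℝ} (hp : 0 < p) (hp2 : p ≤ 2) (F : MI N → ℝ≥0) :
    U 2 (U p F) ≤ U p (U 2 F) := by
  intro β
  unfold U
  have h := mink (univ : Finset (Fin N)) (univ : Finset (Fin N))
    (fun x y => F (β + Pi.single x 1 + Pi.single y 1) ^ p) (q := 2 / p)
    ((one_le_div hp).2 hp2)
  have h' := NNReal.rpow_le_rpow h (z := 1 / p) (by positivity)
  have e1 : 1 / p * 2 = 2 / p := by ring
  have e2 : 1 / (2 / p) * (1 / p) = 1 / 2 := by field_simp
  have e3 : p * (2 / p) = 2 := by field_simp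
  have e4 : 1 / (2/p) = 1 / 2 * p := by field_simp
  simp only [← NNReal.rpow_mul, e1, e2, e3] at h' ⊢
  rw [e4] at h'
  convert h' using 7
  rw [add_right_comm]

lemma U_comm_iter {p : ℝ} (hp : 0 < p) (hp2 : p ≤ 2) (F : MI N → ℝ≥0) (n : ℕ) :
    U 2 ((U p)^[n] F) ≤ (U p)^[n] (U 2 F) := by
  induction n with
  | zero => simp
  | succ n ih =>
    simp only [Function.iterate_succ_apply']
    exact (U_comm hp hp2 _).trans (U_mono hp ih)

lemma U_holder {p r θ s : ℝ} (hp : 0 < p) (hr : 0 < r) (hθ : 0 ≤ θ) (hs : 0 ≤ s)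
    (hsθ : s + θ ≤ 1) (hr' : 1 / r = (1 - θ) / p + θ / 2) (A B : MI N → ℝ≥0) (β : MI N) :
    U r (fun β => A β ^ (1 - s) * B β ^ s) β ≤
      (U p A β) ^ (1 - s - θ) * (U 2 A β) ^ θ * (U p B β) ^ s := by
  unfold U
  have h1 : 0 ≤ 1 - s - θ := by linarith
  have h := holder3 (univ : Finset (Fin N)) (fun x => A (β + Pi.single x 1) ^ p)
    (fun x => A (β + Pi.single x 1) ^ (2:ℝ)) (fun x => B (β + Pi.single x 1) ^ p)
    (s := r * ((1 - s - θ) / p)) (t := r * (θ / 2)) (u := r * (s / p))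
    (by positivity) (by positivity) (by positivity) (by
      have : (1 - s - θ) / p + θ / 2 + s / p = 1 / r := by rw [hr']; ring
      rw [← mul_add, ← mul_add, this]; field_simp)
  have h' := NNReal.rpow_le_rpow h (z := 1 / r) (by positivity)
  have e1 : r * ((1 - s - θ) / p) * (1 / r) = 1 / p * (1 - s - θ) := by field_simp
  have e2 : r * (θ / 2) * (1 / r) = 1 / 2 * θ := by field_simp
  have e3 : r * (s / p) * (1 / r) = 1 / p * s := by field_simp
  simp only [NNReal.mul_rpow, ← NNReal.rpow_mul, e1, e2, e3] at h' ⊢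
  refine le_trans (le_of_eq ?_) h'
  congr 1
  refine Finset.sum_congr rfl fun x _ => ?_
  have e4 : p * (r * ((1 - s - θ) / p)) = (1 - s - θ) * r := by field_simp
  have e5 : 2 * (r * (θ / 2)) = θ * r := by field_simp
  have e6 : p * (r * (s / p)) = s * r := by field_simp
  rw [e4, e5, e6, ← NNReal.rpow_add_of_nonneg _ (by positivity) (by positivity)]
  congr 2
  ring

lemma U_iter_holder {p r θ : ℝ} (hp : 0 < p) (hp2 : p ≤ 2) (hr : 0 < r) (hθ : 0 ≤ θ)
    (hr' : 1 / r = (1 - θ) / p + θ / 2) (F : MI N → ℝ≥0) (n : ℕ) (hn : (n + 1) * θ ≤ 1) :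
    ∀ β, (U r)^[n+1] F β ≤ ((U p)^[n+1] F β) ^ (1 - (n+1) * θ)
      * ((U p)^[n] (U 2 F) β) ^ ((n+1) * θ) := by
  induction n with
  | zero =>
    intro β
    have := U_holder (N := N) hp hr hθ le_rfl (by simpa using hn) hr' F F β
    simpa using this
  | succ n ih =>
    push_cast at hn ⊢
    have ih := ih (by linarith)
    intro β
    rw [Function.iterate_succ_apply']
    refine (U_mono hr (G := fun β => _) ih β).trans ?_
    refine (U_holder hp hr hθ (by positivity) (by linarith) hr' _ _ β).trans ?_
    have h2 := U_comm_iter hp hp2 F (n+1) β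
    rw [← Function.iterate_succ_apply' (U p), ← Function.iterate_succ_apply' (U p)]
    have : ((U p)^[n+1] (U 2 F) β) ^ ((n + 1 + 1) * θ) =
      ((U p)^[n+1] (U 2 F) β) ^ θ * ((U p)^[n+1] (U 2 F) β) ^ ((n + 1) * θ) := by
      rw [← NNReal.rpow_add_of_nonneg _ (by positivity) (by positivity)]
      congr 1; ring
    rw [this, ← mul_assoc]
    have e : 1 - (n + 1) * θ - θ = 1 - (n + 1 + 1) * θ := by ring
    rw [e]
    gcongr

/-- BH exponent -/
noncomputable def pe (k : ℕ) : ℝ := 2 * k / (k + 1)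

lemma pe_pos {k : ℕ} (hk : 1 ≤ k) : 0 < pe k := by
  have : (0:ℝ) < k := by exact_mod_cast hk
  unfold pe; positivity

lemma pe_le (k : ℕ) : pe k ≤ 2 := by
  unfold pe
  rw [div_le_iff₀ (by positivity)]; linarith

lemma blei_step {k : ℕ} (hk : 1 ≤ k) (F : MI N → ℝ≥0) :
    (U (pe (k+1)))^[k+1] F ≤ (U (pe k))^[k] (U 2 F) := by
  intro β
  have hk0 : (0:ℝ) < k := by exact_mod_cast hk
  have h := U_iter_holder (N := N) (p := pe k) (r := pe (k+1)) (θ := 1 / (k + 1))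
    (pe_pos hk) (pe_le k) (pe_pos (by omega)) (by positivity)
    (by unfold pe; push_cast; field_simp; ring) F k (by field_simp; rfl) β
  have e : ((k:ℝ) + 1) * (1 / (k + 1)) = 1 := by field_simp
  rw [e] at h
  simpa using h

lemma blei {k : ℕ} (hk : 1 ≤ k) (j : ℕ) (F : MI N → ℝ≥0) :
    (U (pe (k+j)))^[k+j] F ≤ (U (pe k))^[k] ((U 2)^[j] F) := by
  induction j generalizing F with
  | zero => simp
  | succ j ih =>
    refine (blei_step (k := k + j) (by omega) F).trans ?_
    rw [Function.iterate_succ_apply]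
    exact ih (U 2 F)

end BH

open Finset

namespace BH
open scoped NNReal
variable {N : ℕ}

abbrev AD (N n : ℕ) : Finset (MI N) := piAntidiag (univ : Finset (Fin N)) n

noncomputable abbrev mu (α : MI N) : ℕ := Nat.multinomial univ α

lemma exists_functional {S : Type*} [CommSemiring S] (g : MI N → S) :
    ∃ φ : MvPolynomial (Fin N) S →ₗ[S] S, ∀ α : MI N, φ (∏ i, MvPolynomial.X i ^ α i) = g α := by
  refine ⟨(MvPolynomial.basisMonomials (Fin N) S).constr S (fun s => g s), fun α => ?_⟩
  have : (∏ i, (MvPolynomial.X i : MvPolynomial (Fin N) S) ^ α i)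
      = MvPolynomial.basisMonomials (Fin N) S (Finsupp.equivFunOnFinite.symm α) := by
    rw [MvPolynomial.coe_basisMonomials]
    simp only []
    rw [MvPolynomial.monomial_eq,
      Finsupp.prod_fintype _ _ (by simp)]
    simp
  rw [this, Module.Basis.constr_basis]
  simp

lemma prod_pow_single {S : Type*} [CommSemiring S] (X : Fin N → S) (x : Fin N) (α : MI N) :
    ∏ i, X i ^ (α + Pi.single x 1 : MI N) i = X x * ∏ i, X i ^ α i := by
  simp only [Pi.add_apply, pow_add, Finset.prod_mul_distrib]
  rw [mul_comm]
  congr 1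
  rw [Finset.prod_eq_single x]
  · simp
  · intro b _ hb; simp [hb]
  · simp

lemma sum_rec {S : Type*} [CommSemiring S] (n : ℕ) (g : MI N → S) :
    ∑ x, ∑ α ∈ AD N n, (mu α : S) * g (α + Pi.single x 1) = ∑ α ∈ AD N (n+1), (mu α : S) * g α := by
  obtain ⟨φ, hφ⟩ := exists_functional g
  have h : (∑ x : Fin N, (MvPolynomial.X x : MvPolynomial (Fin N) S)) ^ (n+1) =
      ∑ x : Fin N, ∑ α ∈ AD N n, (mu α : MvPolynomial (Fin N) S) *
        ∏ i, MvPolynomial.X i ^ (α + Pi.single x 1 : MI N) i := by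
    rw [pow_succ', Finset.sum_mul, sum_pow_eq_sum_piAntidiag]
    refine Finset.sum_congr rfl fun x _ => ?_
    rw [Finset.mul_sum]
    refine Finset.sum_congr rfl fun α _ => ?_
    rw [prod_pow_single]; ring
  rw [sum_pow_eq_sum_piAntidiag] at h
  have h2 := congrArg φ h
  simp only [map_sum, ← nsmul_eq_mul, map_nsmul, hφ] at h2
  simpa [nsmul_eq_mul] using h2.symm

lemma U_iter_eq {p : ℝ} (hp : 0 < p) (n : ℕ) (F : MI N → ℝ≥0) (β : MI N) :
    (U p)^[n] F β = (∑ α ∈ AD N n, (mu α : ℝ≥0) * F (β + α) ^ p) ^ (1 / p) := by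
  have e : 1 / p * p = 1 := by field_simp
  have e' : p * (1 / p) = 1 := by field_simp
  induction n generalizing β with
  | zero => simp [mu, Nat.multinomial, hp.ne']
  | succ n ih =>
    rw [Function.iterate_succ_apply', U]
    simp only [ih, ← NNReal.rpow_mul, e, NNReal.rpow_one]
    rw [← sum_rec n (fun α => F (β + α) ^ p)]
    congr 1
    refine Finset.sum_congr rfl fun x _ => Finset.sum_congr rfl fun α _ => ?_
    rw [add_assoc, add_comm α]

/-! ### torus -/

noncomputable def zt (R : ℕ) : ℂ := Complex.exp (2 * Real.pi * Complex.I / R)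

noncomputable def Y (R : ℕ) (ω : Fin N → Fin R) (j : Fin N) : ℂ := zt R ^ (ω j : ℕ)

lemma zt_prim {R : ℕ} (hR : R ≠ 0) : IsPrimitiveRoot (zt R) R := Complex.isPrimitiveRoot_exp R hR

lemma zt_norm {R : ℕ} (hR : R ≠ 0) : ‖zt R‖ = 1 := (zt_prim hR).norm'_eq_one hR

lemma Y_norm {R : ℕ} (hR : R ≠ 0) (ω : Fin N → Fin R) (j : Fin N) : ‖Y R ω j‖ = 1 := by
  simp [Y, zt_norm hR]

lemma zt_sum {R : ℕ} (hR : R ≠ 0) {a b : ℕ} (ha : a < R) (hb : b < R) :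
    ∑ t : Fin R, (zt R ^ (t:ℕ)) ^ a * (starRingEnd ℂ) ((zt R ^ (t:ℕ)) ^ b) =
      if a = b then (R:ℂ) else 0 := by
  have hz := zt_prim hR
  have hn : zt R * (starRingEnd ℂ) (zt R) = 1 := by
    rw [Complex.mul_conj, Complex.normSq_eq_norm_sq, zt_norm hR]; simp
  split_ifs with h
  · subst h
    have : ∀ t : Fin R, (zt R ^ (t:ℕ)) ^ a * (starRingEnd ℂ) ((zt R ^ (t:ℕ)) ^ a) = 1 := by
      intro t
      rw [map_pow, map_pow, ← mul_pow, ← mul_pow, hn]; simp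
    rw [Finset.sum_congr rfl fun t _ => this t]; simp
  · set q := zt R ^ a * (starRingEnd ℂ) (zt R) ^ b with hq
    have h1 : ∀ t : Fin R, (zt R ^ (t:ℕ)) ^ a * (starRingEnd ℂ) ((zt R ^ (t:ℕ)) ^ b) = q ^ (t:ℕ) := by
      intro t
      rw [map_pow, map_pow, hq, mul_pow]
      ring
    simp only [h1]
    rw [Fin.sum_univ_eq_sum_range (fun t => q ^ t) R]
    have hqR : q ^ R = 1 := by
      rw [hq, mul_pow, pow_right_comm, pow_right_comm _ b, ← map_pow, hz.pow_eq_one]; simp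
    have hq1 : q ≠ 1 := by
      intro hq1
      apply h
      apply hz.pow_inj ha hb
      calc zt R ^ a = zt R ^ a * (zt R * (starRingEnd ℂ) (zt R)) ^ b := by rw [hn]; simp
        _ = q * zt R ^ b := by rw [hq]; ring
        _ = zt R ^ b := by rw [hq1]; simp
    have h3 := mul_neg_geom_sum q R
    rw [hqR, sub_self] at h3
    rcases mul_eq_zero.1 h3 with h4 | h4
    · exact absurd (sub_eq_zero.1 h4).symm hq1
    · exact h4

lemma orth {R : ℕ} (hR : R ≠ 0) {α β : MI N} (hα : ∀ j, α j < R) (hβ : ∀ j, β j < R) :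
    ∑ ω : Fin N → Fin R, (∏ j, Y R ω j ^ α j) * (starRingEnd ℂ) (∏ j, Y R ω j ^ β j) =
      if α = β then (R:ℂ) ^ N else 0 := by
  have : ∀ ω : Fin N → Fin R, (∏ j, Y R ω j ^ α j) * (starRingEnd ℂ) (∏ j, Y R ω j ^ β j) =
      ∏ j, (zt R ^ (ω j:ℕ)) ^ α j * (starRingEnd ℂ) ((zt R ^ (ω j:ℕ)) ^ β j) := by
    intro ω
    rw [map_prod, ← Finset.prod_mul_distrib]; rfl
  simp only [this]
  have h2 := Finset.prod_univ_sum (fun _ : Fin N => (univ : Finset (Fin R)))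
    (fun j t => (zt R ^ (t:ℕ)) ^ α j * (starRingEnd ℂ) ((zt R ^ (t:ℕ)) ^ β j))
  rw [Fintype.piFinset_univ] at h2
  rw [← h2]
  simp only [zt_sum hR (hα _) (hβ _)]
  split_ifs with h
  · subst h; simp
  · obtain ⟨j, hj⟩ := Function.ne_iff.1 h
    exact Finset.prod_eq_zero (mem_univ j) (by simp [hj])

lemma parseval {R : ℕ} (hR : R ≠ 0) (A : Finset (MI N)) (hA : ∀ α ∈ A, ∀ j, α j < R)
    (d : MI N → ℂ) :
    ∑ ω : Fin N → Fin R, ‖∑ α ∈ A, d α * ∏ j, Y R ω j ^ α j‖ ^ 2 =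
      (R:ℝ) ^ N * ∑ α ∈ A, ‖d α‖ ^ 2 := by
  have hc : ∀ z : ℂ, ((‖z‖ ^ 2 : ℝ) : ℂ) = z * (starRingEnd ℂ) z := by
    intro z; rw [Complex.mul_conj, Complex.normSq_eq_norm_sq]
  apply Complex.ofReal_injective
  rw [Complex.ofReal_sum]
  simp only [hc]
  calc _ = ∑ ω : Fin N → Fin R, ∑ α ∈ A, ∑ β ∈ A, d α * (starRingEnd ℂ) (d β) *
        ((∏ j, Y R ω j ^ α j) * (starRingEnd ℂ) (∏ j, Y R ω j ^ β j)) := by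
        refine Finset.sum_congr rfl fun ω _ => ?_
        rw [map_sum, Finset.sum_mul_sum]
        refine Finset.sum_congr rfl fun α _ => Finset.sum_congr rfl fun β _ => ?_
        rw [map_mul]; ring
    _ = ∑ α ∈ A, ∑ β ∈ A, d α * (starRingEnd ℂ) (d β) * (if α = β then (R:ℂ) ^ N else 0) := by
        rw [Finset.sum_comm]
        refine Finset.sum_congr rfl fun α hα => ?_
        rw [Finset.sum_comm]
        refine Finset.sum_congr rfl fun β hβ => ?_
        rw [← Finset.mul_sum, orth hR (hA α hα) (hA β hβ)]
    _ = _ := by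
        rw [Complex.ofReal_mul, Complex.ofReal_sum, Finset.mul_sum]
        refine Finset.sum_congr rfl fun α hα => ?_
        simp only [mul_ite, mul_zero, Finset.sum_ite_eq, hα, if_true, hc]
        push_cast; ring

lemma mem_AD {n : ℕ} {α : MI N} : α ∈ AD N n ↔ ∑ i, α i = n := by simp

lemma AD_lt {n R : ℕ} (h : n < R) : ∀ α ∈ AD N n, ∀ j, α j < R := by
  intro α hα j
  rw [mem_AD] at hα
  have := Finset.single_le_sum (f := α) (fun i _ => Nat.zero_le _) (mem_univ j)
  omega

lemma card_fiber (A : Finset (MI N)) (γ : MI N) :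
    #{q ∈ A ×ˢ A | q.1 + q.2 = γ} ≤ 2 ^ (∑ i, γ i) := by
  classical
  have h1 : #{q ∈ A ×ˢ A | q.1 + q.2 = γ} ≤ #(Finset.Iic γ) := by
    refine Finset.card_le_card_of_injOn Prod.fst ?_ ?_
    · intro q hq
      simp only [coe_filter, Set.mem_ofPred_eq] at hq
      simp only [coe_Iic, Set.mem_Iic]
      rw [← hq.2]; exact le_self_add
    · intro q hq q' hq' h
      simp only [coe_filter, Set.mem_ofPred_eq] at hq hq'
      have := hq.2.trans hq'.2.symm
      rw [h] at this
      exact Prod.ext h (add_left_cancel this)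
  refine h1.trans ?_
  rw [Pi.card_Iic, ← Finset.prod_pow_eq_pow_sum]
  refine Finset.prod_le_prod' fun i _ => ?_
  rw [Nat.card_Iic]
  exact Nat.lt_two_pow_self

lemma fourth {R j : ℕ} (hR : 2 * j < R) (d : MI N → ℂ) :
    ∑ ω : Fin N → Fin R, ‖∑ α ∈ AD N j, d α * ∏ i, Y R ω i ^ α i‖ ^ 4 ≤
      (R:ℝ) ^ N * (4 ^ j * (∑ α ∈ AD N j, ‖d α‖ ^ 2) ^ 2) := by
  classical
  have hR0 : R ≠ 0 := by omega
  set A := AD N j with hAdef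
  set e : MI N → ℂ := fun γ => ∑ q ∈ A ×ˢ A with q.1 + q.2 = γ, d q.1 * d q.2 with he
  have hmap : ∀ q ∈ A ×ˢ A, q.1 + q.2 ∈ AD N (2 * j) := by
    intro q hq
    rw [Finset.mem_product, hAdef, mem_AD, mem_AD] at hq
    rw [mem_AD]
    simp only [Pi.add_apply, Finset.sum_add_distrib, hq.1, hq.2]; ring
  have hsq : ∀ ω : Fin N → Fin R, ‖∑ α ∈ A, d α * ∏ i, Y R ω i ^ α i‖ ^ 4 =
      ‖∑ γ ∈ AD N (2 * j), e γ * ∏ i, Y R ω i ^ γ i‖ ^ 2 := by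
    intro ω
    have : (∑ α ∈ A, d α * ∏ i, Y R ω i ^ α i) ^ 2 =
        ∑ γ ∈ AD N (2 * j), e γ * ∏ i, Y R ω i ^ γ i := by
      rw [sq, Finset.sum_mul_sum, ← Finset.sum_product',
        ← Finset.sum_fiberwise_of_maps_to hmap]
      refine Finset.sum_congr rfl fun γ _ => ?_
      rw [he]
      simp only
      rw [Finset.sum_mul]
      refine Finset.sum_congr rfl fun q hq => ?_
      have hq2 := (Finset.mem_filter.1 hq).2
      rw [← hq2]
      simp only [Pi.add_apply, pow_add, Finset.prod_mul_distrib]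
      ring
    rw [← this, norm_pow]; ring
  simp only [hsq]
  rw [parseval hR0 _ (AD_lt hR)]
  refine mul_le_mul_of_nonneg_left ?_ (by positivity)
  calc ∑ γ ∈ AD N (2 * j), ‖e γ‖ ^ 2
      ≤ ∑ γ ∈ AD N (2 * j), 4 ^ j * ∑ q ∈ A ×ˢ A with q.1 + q.2 = γ, (‖d q.1‖ * ‖d q.2‖) ^ 2 := by
        refine Finset.sum_le_sum fun γ hγ => ?_
        have h1 : ‖e γ‖ ≤ ∑ q ∈ A ×ˢ A with q.1 + q.2 = γ, ‖d q.1‖ * ‖d q.2‖ := by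
          refine (norm_sum_le _ _).trans (le_of_eq ?_)
          simp
        have h2 := sq_sum_le_card_mul_sum_sq (s := {q ∈ A ×ˢ A | q.1 + q.2 = γ})
          (f := fun q => ‖d q.1‖ * ‖d q.2‖)
        have h3 := card_fiber A γ
        rw [mem_AD.1 hγ] at h3
        have h4 : ((#{q ∈ A ×ˢ A | q.1 + q.2 = γ} : ℕ) : ℝ) ≤ 4 ^ j := by
          calc ((#{q ∈ A ×ˢ A | q.1 + q.2 = γ} : ℕ) : ℝ) ≤ ((2 ^ (2 * j) : ℕ) : ℝ) := by
                exact_mod_cast h3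
            _ = 4 ^ j := by rw [pow_mul]; norm_num
        calc ‖e γ‖ ^ 2 ≤ _ := pow_le_pow_left₀ (norm_nonneg _) h1 2
          _ ≤ _ := h2
          _ ≤ _ := mul_le_mul_of_nonneg_right h4 (Finset.sum_nonneg fun _ _ => by positivity)
    _ = 4 ^ j * (∑ α ∈ A, ‖d α‖ ^ 2) ^ 2 := by
        rw [← Finset.mul_sum, Finset.sum_fiberwise_of_maps_to hmap, Finset.sum_product, sq,
          Finset.sum_mul_sum]
        simp only [mul_pow]

end BH

open Finset

namespace BH
open scoped NNReal
variable {N : ℕ}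

lemma hyper {R j k : ℕ} (hk : 1 ≤ k) (hR : 2 * j < R) (d : MI N → ℂ) :
    (∑ α ∈ AD N j, ‖d α‖₊ ^ (2:ℝ)) ^ (1 / 2 : ℝ) ≤
      (2:ℝ≥0) ^ ((j:ℝ) / k) * ((∑ ω : Fin N → Fin R,
        ‖∑ α ∈ AD N j, d α * ∏ i, Y R ω i ^ α i‖₊ ^ pe k) / (R:ℝ≥0) ^ N) ^ (1 / pe k) := by
  have hk0 : (0:ℝ) < k := by exact_mod_cast hk
  have hR0 : R ≠ 0 := by omega
  have hRp : (0:ℝ≥0) < (R:ℝ≥0) := by exact_mod_cast Nat.pos_of_ne_zero hR0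
  set Q : (Fin N → Fin R) → ℝ≥0 := fun ω => ‖∑ α ∈ AD N j, d α * ∏ i, Y R ω i ^ α i‖₊ with hQ
  set T : ℝ≥0 := ∑ α ∈ AD N j, ‖d α‖₊ ^ (2:ℝ) with hT
  set n : ℝ≥0 := (R:ℝ≥0) ^ N with hn
  have hn0 : n ≠ 0 := by positivity
  set p := pe k with hp
  have hp0 : 0 < p := pe_pos hk
  have hp2 : p ≤ 2 := pe_le k
  have h2 : ∑ ω, Q ω ^ (2:ℝ) = n * T := by
    have := parseval hR0 (AD N j) (AD_lt (by omega)) d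
    rw [← NNReal.coe_inj]
    push_cast [hT, hn, hQ]
    simpa using this
  have h4 : ∑ ω, Q ω ^ (4:ℝ) ≤ n * (4 ^ j * T ^ 2) := by
    have := fourth hR d
    rw [← NNReal.coe_le_coe]
    push_cast [hT, hn, hQ]
    have e : ∀ x : ℝ, x ^ (4:ℝ) = x ^ 4 := fun x => by exact_mod_cast Real.rpow_natCast x 4
    simpa [e] using this
  set s := 2 / (4 - p) with hs
  set t := (2 - p) / (4 - p) with ht
  have h4p : 0 < 4 - p := by linarith
  have hs0 : 0 < s := by positivity
  have ht0 : 0 ≤ t := div_nonneg (by linarith) h4p.le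
  have hst : s + t = 1 := by rw [hs, ht]; field_simp; ring
  have hH := holder2 univ (fun ω => Q ω ^ p) (fun ω => Q ω ^ (4:ℝ)) hs0.le ht0 hst
  have e1 : ∀ ω, (Q ω ^ p) ^ s * (Q ω ^ (4:ℝ)) ^ t = Q ω ^ (2:ℝ) := by
    intro ω
    rw [← NNReal.rpow_mul, ← NNReal.rpow_mul,
      ← NNReal.rpow_add_of_nonneg _ (by positivity) (by positivity)]
    congr 1
    rw [hs, ht]; field_simp; ring
  simp only [e1] at hH
  rw [h2] at hH
  set S := (∑ ω, Q ω ^ p) / n with hS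
  have hSn : ∑ ω, Q ω ^ p = n * S := by rw [hS]; field_simp
  rw [hSn] at hH
  have hH2 : n * T ≤ n * (S ^ s * (4 ^ j) ^ t * T ^ (2 * t)) := by
    refine hH.trans ?_
    calc (n * S) ^ s * (∑ ω, Q ω ^ (4:ℝ)) ^ t ≤ (n * S) ^ s * (n * (4 ^ j * T ^ 2)) ^ t := by
          gcongr
      _ = (n ^ s * n ^ t) * (S ^ s * (4 ^ j) ^ t * T ^ (2 * t)) := by
          rw [NNReal.mul_rpow, NNReal.mul_rpow, NNReal.mul_rpow, NNReal.rpow_mul,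
            show T ^ (2:ℝ) = T ^ 2 by exact_mod_cast NNReal.rpow_natCast T 2]
          ring
      _ = _ := by rw [← NNReal.rpow_add hn0, hst, NNReal.rpow_one]
  have hH3 : T ≤ S ^ s * (4 ^ j) ^ t * T ^ (2 * t) :=
    le_of_mul_le_mul_left hH2 (pos_iff_ne_zero.2 hn0)
  rcases eq_or_ne T 0 with hT0 | hT0
  · rw [hT0, NNReal.zero_rpow (by norm_num)]; exact zero_le
  have hH4 : T ^ (1 - 2 * t) ≤ S ^ s * (4 ^ j) ^ t := by
    rw [NNReal.rpow_sub hT0, NNReal.rpow_one]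
    exact div_le_of_le_mul₀ zero_le zero_le hH3
  have hH5 := NNReal.rpow_le_rpow hH4 (z := 1 / (p * s)) (by positivity)
  have f1 : (1 - 2 * t) * (1 / (p * s)) = 1 / 2 := by
    rw [hs, ht]; field_simp; ring
  have f2 : s * (1 / (p * s)) = 1 / p := by field_simp
  have f3 : 2 * (j:ℝ) * (t * (1 / (p * s))) = (j:ℝ) / k := by
    have : t * (1 / (p * s)) = 1 / (2 * k) := by
      have : t * (1 / (p * s)) = (2 - p) / (2 * p) := by rw [hs, ht]; field_simp
      rw [this, hp, pe]; field_simp; ring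
    rw [this]; field_simp
  have f4 : (4:ℝ≥0) ^ j = 2 ^ (2 * (j:ℝ)) := by
    rw [show 2 * (j:ℝ) = ((2 * j : ℕ) : ℝ) by push_cast; ring, NNReal.rpow_natCast, pow_mul]
    norm_num
  rw [f4, NNReal.mul_rpow, ← NNReal.rpow_mul, ← NNReal.rpow_mul, ← NNReal.rpow_mul,
    ← NNReal.rpow_mul, f1, f2, f3] at hH5
  rw [mul_comm]
  exact hH5

/-! ### polarization -/

lemma coeff_one_le (n : ℕ) (b : ℕ → ℂ) (M : ℝ)
    (h : ∀ ω : ℂ, ‖ω‖ = 1 → ‖∑ i ∈ range (n + 2), b i * ω ^ i‖ ≤ M) : ‖b 1‖ ≤ M := by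
  set R := n + 2 with hR
  have hR0 : R ≠ 0 := by omega
  have key : ∑ t : Fin R, (∑ i ∈ range R, b i * (zt R ^ (t:ℕ)) ^ i) *
      (starRingEnd ℂ) ((zt R ^ (t:ℕ)) ^ 1) = R * b 1 := by
    simp only [Finset.sum_mul]
    rw [Finset.sum_comm]
    rw [Finset.sum_congr rfl (g := fun i => b i * if i = 1 then (R:ℂ) else 0)]
    · simp only [mul_ite, mul_zero, Finset.sum_ite_eq']
      rw [if_pos (by simp [hR]), mul_comm]
    · intro i hi
      rw [← zt_sum hR0 (Finset.mem_range.1 hi) (by omega), Finset.mul_sum]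
      refine Finset.sum_congr rfl fun t _ => by ring
  have h2 : ‖(R:ℂ) * b 1‖ ≤ R * M := by
    rw [← key]
    refine (norm_sum_le _ _).trans ?_
    calc _ ≤ ∑ t : Fin R, M := by
          refine Finset.sum_le_sum fun t _ => ?_
          have hz : ‖zt R ^ (t:ℕ)‖ = 1 := by simp [zt_norm hR0]
          rw [norm_mul, RCLike.norm_conj, norm_pow, hz]
          simpa using h _ hz
      _ = R * M := by simp
  rw [norm_mul, Complex.norm_natCast] at h2
  exact le_of_mul_le_mul_left h2 (by positivity)

section
variable {A : Type*} [CommRing A] [Algebra ℂ A]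

def ell (X : Fin N → A) (z : Fin N → ℂ) : A := ∑ i, z i • X i

lemma r_bound (n : ℕ) : (1:ℝ) ≤ 3 * (n / (n + 1)) ^ n := by
  rcases Nat.eq_zero_or_pos n with rfl | hn
  · norm_num
  have hn0 : (0:ℝ) < n := by exact_mod_cast hn
  have h1 : ((n + 1) / n : ℝ) ^ n ≤ 3 := by
    have h2 : ((n + 1) / n : ℝ) ≤ Real.exp (1 / n) := by
      have := Real.add_one_le_exp (1 / (n:ℝ))
      calc ((n + 1) / n : ℝ) = 1 / n + 1 := by field_simp; ring
        _ ≤ _ := this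
    calc ((n + 1) / n : ℝ) ^ n ≤ Real.exp (1 / n) ^ n := pow_le_pow_left₀ (by positivity) h2 n
      _ = Real.exp 1 := by rw [← Real.exp_nat_mul]; congr 1; field_simp
      _ ≤ 3 := Real.exp_one_lt_three.le
  have h3 : ((n + 1) / n : ℝ) ^ n * (n / (n + 1)) ^ n = 1 := by
    rw [← mul_pow]
    have : ((n + 1) / n : ℝ) * (n / (n + 1)) = 1 := by field_simp
    rw [this, one_pow]
  calc (1:ℝ) = ((n + 1) / n : ℝ) ^ n * (n / (n + 1)) ^ n := h3.symm
    _ ≤ _ := by gcongr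

lemma polar1 (X : Fin N → A) (φ : A →ₗ[ℂ] ℂ) (n : ℕ) (M : ℝ)
    (h : ∀ z : Fin N → ℂ, (∀ i, ‖z i‖ ≤ 1) → ‖φ (ell X z ^ (n + 1))‖ ≤ M)
    (x y : Fin N → ℂ) (hx : ∀ i, ‖x i‖ ≤ 1) (hy : ∀ i, ‖y i‖ ≤ 1) :
    ‖φ (ell X x * ell X y ^ n)‖ ≤ 3 * M := by
  set r : ℝ := n / (n + 1) with hr
  set s : ℝ := 1 / (n + 1) with hs
  have hr0 : 0 ≤ r := by positivity
  have hs0 : 0 ≤ s := by positivity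
  have hrs : r + s = 1 := by rw [hr, hs]; field_simp
  have hc := coeff_one_le n (fun i => ((s:ℂ) ^ i * (r:ℂ) ^ (n + 1 - i) * ((n+1).choose i : ℂ)) *
    φ (ell X x ^ i * ell X y ^ (n + 1 - i))) M (by
      intro ω hω
      have hz := h (fun i => s * ω * x i + r * y i) (by
        intro i
        calc ‖(s:ℂ) * ω * x i + r * y i‖ ≤ ‖(s:ℂ) * ω * x i‖ + ‖r * y i‖ := norm_add_le _ _
          _ = s * ‖x i‖ + r * ‖y i‖ := by
            simp [hω, abs_of_nonneg hs0, abs_of_nonneg hr0]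
          _ ≤ s * 1 + r * 1 := by gcongr; exact hx i; exact hy i
          _ = 1 := by linarith)
      refine le_trans (le_of_eq ?_) hz
      congr 1
      have he : ell X (fun i => s * ω * x i + r * y i) =
          ((s:ℂ) * ω) • ell X x + (r:ℂ) • ell X y := by
        simp only [ell, add_smul, Finset.sum_add_distrib, mul_smul, Finset.smul_sum]
      rw [he, add_pow, map_sum]
      refine Finset.sum_congr rfl fun i _ => ?_
      have : ((s:ℂ) * ω) • ell X x ^ i = ((s:ℂ) * ω) • ell X x ^ i := rfl
      rw [smul_pow, smul_pow, smul_mul_smul_comm, mul_comm _ (((n+1).choose i : ℕ) : A),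
        ← nsmul_eq_mul, map_nsmul, map_smul, nsmul_eq_mul, smul_eq_mul]
      ring)
  simp only [pow_one, Nat.add_sub_cancel, Nat.choose_one_right] at hc
  have hcoef : ((s:ℂ) * (r:ℂ) ^ n * ((n + 1 : ℕ) : ℂ)) = ((r ^ n : ℝ) : ℂ) := by
    rw [hs]; push_cast
    have : (n:ℂ) + 1 ≠ 0 := by exact_mod_cast Nat.succ_ne_zero n
    field_simp
  rw [hcoef, norm_mul, Complex.norm_real, Real.norm_of_nonneg (by positivity)] at hc
  calc ‖φ (ell X x * ell X y ^ n)‖ ≤ (3 * r ^ n) * ‖φ (ell X x * ell X y ^ n)‖ :=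
        le_mul_of_one_le_left (norm_nonneg _) (r_bound n)
    _ = 3 * (r ^ n * ‖φ (ell X x * ell X y ^ n)‖) := by ring
    _ ≤ 3 * M := by linarith

lemma polar2 (X : Fin N → A) (k j : ℕ) (φ : A →ₗ[ℂ] ℂ) (M : ℝ)
    (h : ∀ z : Fin N → ℂ, (∀ i, ‖z i‖ ≤ 1) → ‖φ (ell X z ^ (k + j))‖ ≤ M)
    (w y : Fin N → ℂ) (hw : ∀ i, ‖w i‖ ≤ 1) (hy : ∀ i, ‖y i‖ ≤ 1) :
    ‖φ (ell X w ^ k * ell X y ^ j)‖ ≤ 3 ^ k * M := by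
  induction k generalizing φ M with
  | zero => simpa using h y hy
  | succ k ih =>
    have := ih (φ ∘ₗ LinearMap.mulLeft ℂ (ell X w)) (3 * M) (by
      intro z hz
      exact polar1 X φ (k + j) M (by rwa [show k + j + 1 = k + 1 + j by ring]) w z hw hz)
    simp only [LinearMap.comp_apply, LinearMap.mulLeft_apply] at this
    rw [← mul_assoc, ← pow_succ'] at this
    rw [pow_succ (3:ℝ)]; linarith

lemma polar3 (X : Fin N → A) (k j : ℕ) (φ : A →ₗ[ℂ] ℂ) (M : ℝ)
    (h : ∀ z : Fin N → ℂ, (∀ i, ‖z i‖ ≤ 1) → ‖φ (ell X z ^ (k + 1 + j))‖ ≤ M)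
    (w y : Fin N → ℂ) (hw : ∀ i, ‖w i‖ ≤ 1) (hy : ∀ i, ‖y i‖ ≤ 1) :
    ∑ x, ‖φ (X x * (ell X w ^ k * ell X y ^ j))‖ ≤ 3 ^ (k + 1) * M := by
  set q := ell X w ^ k * ell X y ^ j with hq
  set u : Fin N → ℂ := fun x => (starRingEnd ℂ) (φ (X x * q)) / ‖φ (X x * q)‖ with hu
  have hu1 : ∀ i, ‖u i‖ ≤ 1 := by
    intro i
    rw [hu]
    simp only [norm_div, RCLike.norm_conj, Complex.norm_real, norm_norm]
    exact div_self_le_one _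
  have := polar2 X k j (φ ∘ₗ LinearMap.mulLeft ℂ (ell X u)) (3 * M) (by
      intro z hz
      exact polar1 X φ (k + j) M (by rwa [show k + j + 1 = k + 1 + j by ring]) u z hu1 hz) w y hw hy
  simp only [LinearMap.comp_apply, LinearMap.mulLeft_apply] at this
  rw [← hq] at this
  have he : φ (ell X u * q) = ((∑ x, ‖φ (X x * q)‖ : ℝ) : ℂ) := by
    rw [ell, Finset.sum_mul, map_sum]
    push_cast
    refine Finset.sum_congr rfl fun x _ => ?_
    rw [smul_mul_assoc, map_smul, smul_eq_mul, hu]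
    simp only
    rcases eq_or_ne (φ (X x * q)) 0 with h0 | h0
    · simp [h0]
    · have hn : (‖φ (X x * q)‖ : ℂ) ≠ 0 := by simpa using h0
      rw [div_mul_eq_mul_div, mul_comm, Complex.mul_conj, Complex.normSq_eq_norm_sq]
      push_cast
      field_simp
  rw [he, Complex.norm_real, Real.norm_of_nonneg (Finset.sum_nonneg fun _ _ => norm_nonneg _)] at this
  rw [pow_succ (3:ℝ)]; linarith

lemma expand (X : Fin N → A) (φ : A →ₗ[ℂ] ℂ) (q : A) (j : ℕ) (y : Fin N → ℂ) :
    φ (q * ell X y ^ j) = ∑ β ∈ AD N j, ((mu β : ℂ) * φ (q * ∏ i, X i ^ β i)) * ∏ i, y i ^ β i := by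
  rw [ell, sum_pow_eq_sum_piAntidiag, Finset.mul_sum, map_sum]
  refine Finset.sum_congr rfl fun β _ => ?_
  have : q * (((Nat.multinomial univ β : ℕ) : A) * ∏ i, (y i • X i) ^ β i) =
      (mu β) • ((∏ i, y i ^ β i) • (q * ∏ i, X i ^ β i)) := by
    rw [nsmul_eq_mul]
    simp only [Algebra.smul_def, mul_pow, Finset.prod_mul_distrib, map_prod, map_pow]
    ring
  rw [this, map_nsmul, map_smul, nsmul_eq_mul, smul_eq_mul]
  ring

end

lemma mu_bound {k j : ℕ} {γ β : MI N} (hγ : γ ∈ AD N k) (hβ : β ∈ AD N j) :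
    mu (γ + β) ≤ (k + j) ^ k * mu β := by
  rw [mem_AD] at hγ hβ
  have h1 := Nat.multinomial_spec (univ : Finset (Fin N)) (γ + β)
  have h2 := Nat.multinomial_spec (univ : Finset (Fin N)) β
  have h3 : ∑ i, (γ + β) i = k + j := by simp [Finset.sum_add_distrib, hγ, hβ]
  rw [h3] at h1
  rw [hβ] at h2
  have h4 : (k + j).factorial ≤ (k + j) ^ k * j.factorial := by
    have := Nat.factorial_mul_descFactorial (n := k + j) (k := k) (by omega)
    rw [← this, Nat.add_sub_cancel_left, mul_comm]
    exact Nat.mul_le_mul_right _ (Nat.descFactorial_le_pow _ _)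
  have h5 : ∏ i, (β i).factorial ≤ ∏ i, ((γ + β) i).factorial :=
    Finset.prod_le_prod' fun i _ => Nat.factorial_le (by simp)
  have h6 : 0 < ∏ i, (β i).factorial := Finset.prod_pos fun i _ => Nat.factorial_pos _
  refine Nat.le_of_mul_le_mul_left ?_ h6
  calc (∏ i, (β i).factorial) * mu (γ + β) ≤ (k + j).factorial := by
        rw [← h1]; exact Nat.mul_le_mul_right _ h5
    _ ≤ _ := h4
    _ = _ := by rw [← h2]; ring

end BH

open Finset

namespace BH
open scoped NNReal
variable {N : ℕ}

section
variable {A : Type*} [CommRing A] [Algebra ℂ A]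

lemma pe_one : pe 1 = 1 := by norm_num [pe]

noncomputable def hh (X : Fin N → A) (φ : A →ₗ[ℂ] ℂ) (y : Fin N → ℂ) (j : ℕ) : MI N → ℝ≥0 :=
  fun γ => ‖φ ((∏ i, X i ^ γ i) * ell X y ^ j)‖₊

lemma prod_add (X : Fin N → A) (γ β : MI N) :
    ∏ i, X i ^ (γ + β) i = (∏ i, X i ^ γ i) * ∏ i, X i ^ β i := by
  simp only [Pi.add_apply, pow_add, Finset.prod_mul_distrib]

lemma prod_single (X : Fin N → A) (x : Fin N) :
    ∏ i, X i ^ (Pi.single x 1 : MI N) i = X x := by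
  have := prod_pow_single X x 0
  simpa using this

lemma mu_pos (β : MI N) : 1 ≤ mu β := Nat.multinomial_pos _ _

lemma inner_bound (X : Fin N → A) (φ : A →ₗ[ℂ] ℂ) (k j : ℕ) (M : ℝ≥0)
    (h : ∀ z : Fin N → ℂ, (∀ i, ‖z i‖ ≤ 1) → ‖φ (ell X z ^ (k + 1 + j))‖ ≤ M)
    (y : Fin N → ℂ) (hy : ∀ i, ‖y i‖ ≤ 1) :
    (U (pe (k + 1)))^[k + 1] (hh X φ y j) 0 ≤ 2 ^ k * (3 ^ (k + 1) * M) := by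
  have hb := blei (N := N) (k := 1) le_rfl k (hh X φ y j) 0
  rw [add_comm 1 k] at hb
  refine hb.trans ?_
  rw [pe_one, Function.iterate_one, U]
  simp only [NNReal.rpow_one, div_one, zero_add]
  set R := 2 * k + 1 with hR
  have hR0 : R ≠ 0 := by omega
  have hRp : (0:ℝ≥0) < (R:ℝ≥0) := by exact_mod_cast Nat.pos_of_ne_zero hR0
  have hx : ∀ x : Fin N, (U 2)^[k] (hh X φ y j) (Pi.single x 1) ≤ 2 ^ k *
      ((∑ ω : Fin N → Fin R, ‖φ (X x * (ell X (Y R ω) ^ k * ell X y ^ j))‖₊) / (R:ℝ≥0) ^ N) := by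
    intro x
    rw [U_iter_eq (by norm_num)]
    have hy := hyper (N := N) (R := R) (j := k) (k := 1) le_rfl (by omega)
      (fun β => (mu β : ℂ) * φ ((X x * ell X y ^ j) * ∏ i, X i ^ β i))
    simp only [← expand, pe_one] at hy
    simp only [Nat.cast_one, div_one, NNReal.rpow_one, NNReal.rpow_natCast] at hy
    refine le_trans ?_ (hy.trans (le_of_eq ?_))
    · gcongr with β _
      rw [nnnorm_mul, NNReal.mul_rpow, hh, prod_add, prod_single]
      have e : X x * (∏ i, X i ^ β i) * ell X y ^ j = X x * ell X y ^ j * ∏ i, X i ^ β i := by ring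
      rw [e]
      gcongr
      have h1 : (1:ℝ≥0) ≤ (mu β : ℝ≥0) := by exact_mod_cast mu_pos β
      have h2 : ‖(mu β : ℂ)‖₊ = (mu β : ℝ≥0) := by simp
      rw [h2]
      calc ((mu β : ℕ) : ℝ≥0) = ((mu β : ℕ) : ℝ≥0) ^ (1:ℝ) := by simp
        _ ≤ _ := NNReal.rpow_le_rpow_of_exponent_le h1 (by norm_num)
    · congr 2
      refine Finset.sum_congr rfl fun ω _ => ?_
      congr 2; ring
  calc ∑ x, (U 2)^[k] (hh X φ y j) (Pi.single x 1) ≤ ∑ x : Fin N, 2 ^ k *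
      ((∑ ω : Fin N → Fin R, ‖φ (X x * (ell X (Y R ω) ^ k * ell X y ^ j))‖₊) / (R:ℝ≥0) ^ N) :=
        Finset.sum_le_sum fun x _ => hx x
    _ = 2 ^ k * ((∑ ω : Fin N → Fin R,
          ∑ x, ‖φ (X x * (ell X (Y R ω) ^ k * ell X y ^ j))‖₊) / (R:ℝ≥0) ^ N) := by
        rw [← Finset.mul_sum, ← Finset.sum_div, Finset.sum_comm]
    _ ≤ 2 ^ k * ((∑ ω : Fin N → Fin R, 3 ^ (k + 1) * M) / (R:ℝ≥0) ^ N) := by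
        gcongr with ω _
        rw [← NNReal.coe_le_coe]
        push_cast
        exact polar3 X k j φ M h _ y (fun i => (Y_norm hR0 ω i).le) hy
    _ = 2 ^ k * (3 ^ (k + 1) * M) := by
        simp only [Finset.sum_const, Finset.card_univ, Fintype.card_pi, Fintype.card_fin,
          Finset.prod_const, nsmul_eq_mul, Nat.cast_pow]
        field_simp

lemma outer_bound (X : Fin N → A) (φ : A →ₗ[ℂ] ℂ) (k j : ℕ) (M : ℝ≥0)
    (h : ∀ z : Fin N → ℂ, (∀ i, ‖z i‖ ≤ 1) → ‖φ (ell X z ^ (k + 1 + j))‖ ≤ M) :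
    (∑ α ∈ AD N (k + 1 + j), ‖(mu α : ℂ) * φ (∏ i, X i ^ α i)‖₊ ^ pe (k + 1 + j)) ^
      (1 / pe (k + 1 + j)) ≤
    (((k + 1 + j : ℕ) : ℝ≥0) ^ (((k + 1 : ℕ) : ℝ) / 2) * 2 ^ ((j:ℝ) / ((k + 1 : ℕ) : ℝ))) *
      (2 ^ k * (3 ^ (k + 1) * M)) := by
  set m := k + 1 + j with hm
  set p := pe (k + 1) with hp
  have hp0 : 0 < p := pe_pos (by omega)
  have hpm : 0 < pe m := pe_pos (by omega)
  set b : MI N → ℝ≥0 := fun α => (mu α : ℝ≥0) ^ (1 / 2 : ℝ) * ‖φ (∏ i, X i ^ α i)‖₊ with hb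
  set K : ℝ≥0 := 2 ^ k * (3 ^ (k + 1) * M) with hK
  have h1 : (∑ α ∈ AD N m, ‖(mu α : ℂ) * φ (∏ i, X i ^ α i)‖₊ ^ pe m) ^ (1 / pe m) ≤
      (U (pe m))^[m] b 0 := by
    rw [U_iter_eq hpm]
    gcongr with α _
    rw [zero_add, hb, nnnorm_mul, NNReal.mul_rpow]
    simp only
    rw [NNReal.mul_rpow, ← mul_assoc]
    gcongr
    have h1 : (1:ℝ≥0) ≤ (mu α : ℝ≥0) := by exact_mod_cast mu_pos α
    have h2 : ‖(mu α : ℂ)‖₊ = (mu α : ℝ≥0) := by simp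
    rw [h2, ← NNReal.rpow_mul]
    calc (mu α : ℝ≥0) ^ pe m ≤ (mu α : ℝ≥0) ^ (1 + 1 / 2 * pe m) :=
          NNReal.rpow_le_rpow_of_exponent_le h1 (by have := pe_le m; linarith)
      _ = _ := by rw [NNReal.rpow_add_of_nonneg _ (by norm_num) (by positivity), NNReal.rpow_one]
  refine h1.trans ((blei (N := N) (k := k + 1) (by omega) j b 0).trans ?_)
  rw [← hp]
  set R := 2 * j + 1 with hR
  have hR0 : R ≠ 0 := by omega
  have hRp : (0:ℝ≥0) < (R:ℝ≥0) := by exact_mod_cast Nat.pos_of_ne_zero hR0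
  set L : ℝ≥0 := (m : ℝ≥0) ^ (((k + 1 : ℕ) : ℝ) / 2) * 2 ^ ((j:ℝ) / ((k + 1 : ℕ) : ℝ)) with hL
  have h3 : ∀ γ ∈ AD N (k + 1), (U 2)^[j] b γ ≤
      L * ((∑ ω : Fin N → Fin R, hh X φ (Y R ω) j γ ^ p) / (R:ℝ≥0) ^ N) ^ (1 / p) := by
    intro γ hγ
    rw [U_iter_eq (by norm_num)]
    have hy := hyper (N := N) (R := R) (j := j) (k := k + 1) (by omega) (by omega)
      (fun β => (mu β : ℂ) * φ ((∏ i, X i ^ γ i) * ∏ i, X i ^ β i))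
    simp only [← expand] at hy
    rw [hL, mul_assoc]
    refine le_trans ?_ (mul_le_mul_right hy _)
    have e1 : (m : ℝ≥0) ^ (((k + 1 : ℕ) : ℝ) / 2) = ((m : ℝ≥0) ^ (k + 1)) ^ (1 / 2 : ℝ) := by
      rw [← NNReal.rpow_natCast, ← NNReal.rpow_mul]; congr 1; ring
    rw [e1, ← NNReal.mul_rpow]
    gcongr
    rw [Finset.mul_sum]
    refine Finset.sum_le_sum fun β hβ => ?_
    have hmu : (mu (γ + β) : ℝ≥0) ≤ (m : ℝ≥0) ^ (k + 1) * (mu β : ℝ≥0) := by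
      exact_mod_cast mu_bound hγ hβ
    have h2 : ‖(mu β : ℂ)‖₊ = (mu β : ℝ≥0) := by simp
    rw [hb]
    simp only
    rw [prod_add, nnnorm_mul, h2, NNReal.mul_rpow, NNReal.mul_rpow, ← NNReal.rpow_mul]
    norm_num
    rw [← mul_assoc, ← mul_assoc]
    refine mul_le_mul' ?_ le_rfl
    calc (mu β : ℝ≥0) * (mu (γ + β) : ℝ≥0) ≤ (mu β : ℝ≥0) * ((m : ℝ≥0) ^ (k + 1) * (mu β : ℝ≥0)) := by
          gcongr
      _ = _ := by ring
  have e : 1 / p * p = 1 := by field_simp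
  have e' : p * (1 / p) = 1 := by field_simp
  rw [U_iter_eq hp0]
  have hin : ∀ ω : Fin N → Fin R, ∑ γ ∈ AD N (k + 1), (mu γ : ℝ≥0) * hh X φ (Y R ω) j γ ^ p ≤ K ^ p := by
    intro ω
    have := inner_bound X φ k j M h (Y R ω) (fun i => (Y_norm hR0 ω i).le)
    rw [← hp, U_iter_eq hp0] at this
    have := NNReal.rpow_le_rpow this hp0.le
    rw [← NNReal.rpow_mul, e, NNReal.rpow_one] at this
    simpa using this
  calc (∑ γ ∈ AD N (k + 1), (mu γ : ℝ≥0) * (U 2)^[j] b (0 + γ) ^ p) ^ (1 / p)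
      ≤ (∑ γ ∈ AD N (k + 1), (mu γ : ℝ≥0) * (L * ((∑ ω : Fin N → Fin R,
          hh X φ (Y R ω) j γ ^ p) / (R:ℝ≥0) ^ N) ^ (1 / p)) ^ p) ^ (1 / p) := by
        gcongr with γ hγ
        rw [zero_add]
        exact h3 γ hγ
    _ = (L ^ p * ((∑ ω : Fin N → Fin R, ∑ γ ∈ AD N (k + 1), (mu γ : ℝ≥0) *
          hh X φ (Y R ω) j γ ^ p) / (R:ℝ≥0) ^ N)) ^ (1 / p) := by
        congr 1
        rw [Finset.sum_comm, Finset.sum_div, Finset.mul_sum]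
        refine Finset.sum_congr rfl fun γ _ => ?_
        rw [NNReal.mul_rpow, ← NNReal.rpow_mul, e, NNReal.rpow_one, ← Finset.mul_sum]
        ring
    _ ≤ (L ^ p * ((∑ ω : Fin N → Fin R, K ^ p) / (R:ℝ≥0) ^ N)) ^ (1 / p) := by
        gcongr with ω _
        exact hin ω
    _ = (L ^ p * K ^ p) ^ (1 / p) := by
        congr 2
        simp only [Finset.sum_const, Finset.card_univ, Fintype.card_pi, Fintype.card_fin,
          Finset.prod_const, nsmul_eq_mul, Nat.cast_pow]
        field_simp
    _ = L * K := by
        rw [← NNReal.mul_rpow, ← NNReal.rpow_mul, e', NNReal.rpow_one]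

end

lemma poly_bound (k j : ℕ) (c : MI N → ℂ) (M : ℝ) (hM : 0 ≤ M)
    (h : ∀ z : Fin N → ℂ, (∀ i, ‖z i‖ ≤ 1) →
      ‖∑ α ∈ AD N (k + 1 + j), c α * ∏ i, z i ^ α i‖ ≤ M) :
    (∑ α ∈ AD N (k + 1 + j), ‖c α‖ ^ pe (k + 1 + j)) ^ (1 / pe (k + 1 + j)) ≤
    (((k + 1 + j : ℕ) : ℝ) ^ (((k + 1 : ℕ) : ℝ) / 2) * 2 ^ ((j:ℝ) / ((k + 1 : ℕ) : ℝ))) *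
      (2 ^ k * (3 ^ (k + 1) * M)) := by
  obtain ⟨φ, hφ⟩ := exists_functional (fun α : MI N => c α / (mu α : ℂ))
  have hmu : ∀ α : MI N, (mu α : ℂ) * (c α / (mu α : ℂ)) = c α := by
    intro α
    have : (mu α : ℂ) ≠ 0 := by exact_mod_cast (Nat.one_le_iff_ne_zero.1 (mu_pos α))
    field_simp
  lift M to ℝ≥0 using hM
  have := outer_bound MvPolynomial.X φ k j M (by
    intro z hz
    have e := expand MvPolynomial.X φ 1 (k + 1 + j) z
    simp only [one_mul, hφ, hmu] at e
    rw [e]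
    exact h z hz)
  simp only [hφ, hmu] at this
  rw [← NNReal.coe_le_coe] at this
  push_cast at this ⊢
  exact this

end BH

open Finset

namespace BH

lemma final_const (ε : ℝ) (hε : 0 < ε) : ∃ κ : ℝ, 0 < κ ∧ ∀ m : ℕ, 1 ≤ m → ∃ k j : ℕ, m = k + 1 + j ∧
    ((m : ℝ) ^ (((k + 1 : ℕ) : ℝ) / 2) * 2 ^ ((j:ℝ) / ((k + 1 : ℕ) : ℝ))) *
      (2 ^ k * 3 ^ (k + 1)) ≤ κ * (1 + ε) ^ m := by
  obtain ⟨k, hk⟩ := pow_unbounded_of_one_lt (2:ℝ) (show 1 < 1 + ε / 2 by linarith)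
  have hk0 : k ≠ 0 := by rintro rfl; norm_num at hk
  obtain ⟨l, rfl⟩ := Nat.exists_eq_succ_of_ne_zero hk0
  simp only [Nat.succ_eq_add_one] at hk hk0
  set ρ : ℝ := (1 + ε / 2) / (1 + ε) with hρ
  have hρ0 : 0 < ρ := by positivity
  have hρ1 : ρ < 1 := by rw [hρ, div_lt_one (by positivity)]; linarith
  have ht := tendsto_pow_const_mul_const_pow_of_abs_lt_one (l + 1) (r := ρ)
    (by rwa [abs_of_pos hρ0])
  obtain ⟨C, hC⟩ := ht.bddAbove_range
  have hC' : ∀ m : ℕ, (m:ℝ) ^ (l + 1) * ρ ^ m ≤ C := fun m => hC ⟨m, rfl⟩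
  have hC0 : 0 ≤ C := le_trans (by positivity) (hC' 0)
  have half : ∀ (m : ℕ), 1 ≤ m → ∀ k : ℕ, (m:ℝ) ^ ((k:ℝ) / 2) ≤ (m:ℝ) ^ k := by
    intro m hm k
    rw [← Real.rpow_natCast]
    refine Real.rpow_le_rpow_of_exponent_le (by exact_mod_cast hm) ?_
    have : (0:ℝ) ≤ k := by positivity
    linarith
  have six : ∀ k : ℕ, (2:ℝ) ^ k * 3 ^ (k + 1) ≤ 6 ^ (k + 1) := by
    intro k
    have : (6:ℝ) ^ (k + 1) = 2 ^ (k + 1) * 3 ^ (k + 1) := by rw [← mul_pow]; norm_num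
    rw [this]
    gcongr
    · norm_num
    · omega
  refine ⟨C * 6 ^ (l + 1) + ((l + 1 : ℕ) : ℝ) ^ (l + 1) * 6 ^ (l + 1), by positivity, ?_⟩
  intro m hm
  rcases Nat.lt_or_ge m (l + 1) with hlt | hge
  · obtain ⟨k, rfl⟩ := Nat.exists_eq_succ_of_ne_zero (show m ≠ 0 by omega)
    refine ⟨k, 0, rfl, ?_⟩
    simp only [Nat.succ_eq_add_one] at *
    have h1 : (1:ℝ) ≤ (1 + ε) ^ (k + 1) := one_le_pow₀ (by linarith)
    have hl1 : (1:ℝ) ≤ ((l + 1 : ℕ) : ℝ) := by exact_mod_cast Nat.succ_le_succ (Nat.zero_le l)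
    calc _ = ((k + 1 : ℕ) : ℝ) ^ (((k + 1 : ℕ) : ℝ) / 2) * (2 ^ k * 3 ^ (k + 1)) := by simp
      _ ≤ ((k + 1 : ℕ) : ℝ) ^ (k + 1) * 6 ^ (k + 1) := by
          gcongr
          · exact half _ hm _
          · exact six k
      _ ≤ ((l + 1 : ℕ) : ℝ) ^ (l + 1) * 6 ^ (l + 1) := by
          gcongr
          · calc ((k + 1 : ℕ) : ℝ) ^ (k + 1) ≤ ((l + 1 : ℕ) : ℝ) ^ (k + 1) := by gcongr
              _ ≤ _ := pow_le_pow_right₀ hl1 hlt.le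
          · norm_num
      _ ≤ (C * 6 ^ (l + 1) + ((l + 1 : ℕ) : ℝ) ^ (l + 1) * 6 ^ (l + 1)) * 1 := by
          have : 0 ≤ C * 6 ^ (l + 1) := by positivity
          linarith
      _ ≤ _ := by gcongr
  · obtain ⟨j, rfl⟩ := Nat.exists_eq_add_of_le hge
    refine ⟨l, j, rfl, ?_⟩
    have h2 : (2:ℝ) ^ ((j:ℝ) / ((l + 1 : ℕ) : ℝ)) ≤ (1 + ε / 2) ^ (l + 1 + j) := by
      calc (2:ℝ) ^ ((j:ℝ) / ((l + 1 : ℕ) : ℝ)) ≤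
            ((1 + ε / 2) ^ (l + 1)) ^ ((j:ℝ) / ((l + 1 : ℕ) : ℝ)) :=
            Real.rpow_le_rpow (by norm_num) hk.le (by positivity)
        _ = (1 + ε / 2) ^ j := by
            rw [← Real.rpow_natCast, ← Real.rpow_mul (by positivity), ← Real.rpow_natCast]
            congr 1; field_simp
        _ ≤ _ := pow_le_pow_right₀ (by linarith) (by omega)
    have h3 : (1 + ε / 2) ^ (l + 1 + j) = ρ ^ (l + 1 + j) * (1 + ε) ^ (l + 1 + j) := by
      rw [← mul_pow]; congr 1; rw [hρ]; field_simp
    calc _ ≤ (((l + 1 + j : ℕ) : ℝ) ^ (l + 1) * (1 + ε / 2) ^ (l + 1 + j)) * 6 ^ (l + 1) := by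
          gcongr
          · exact half _ hm _
          · exact six l
      _ = ((((l + 1 + j : ℕ) : ℝ) ^ (l + 1) * ρ ^ (l + 1 + j)) * 6 ^ (l + 1)) * (1 + ε) ^ (l + 1 + j) := by
          rw [h3]; ring
      _ ≤ (C * 6 ^ (l + 1)) * (1 + ε) ^ (l + 1 + j) := by
          gcongr
          exact hC' _
      _ ≤ _ := by
          gcongr
          have : (0:ℝ) ≤ ((l + 1 : ℕ) : ℝ) ^ (l + 1) * 6 ^ (l + 1) := by positivity
          linarith

lemma le_sup {N : ℕ} (A : Finset (Fin N → ℕ)) (c : (Fin N → ℕ) → ℂ) (w : Fin N → ℂ)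
    (hw : ∀ j, ‖w j‖ ≤ 1) :
    ‖∑ α ∈ A, c α * ∏ j, w j ^ α j‖ ≤ ⨆ z ∈ {z : Fin N → ℂ | ∀ j, ‖z j‖ ≤ 1},
      ‖∑ α ∈ A, c α * ∏ j, z j ^ α j‖ := by
  have hb : ∀ z : Fin N → ℂ, (∀ j, ‖z j‖ ≤ 1) → ‖∑ α ∈ A, c α * ∏ j, z j ^ α j‖ ≤ ∑ α ∈ A, ‖c α‖ := by
    intro z hz
    refine (norm_sum_le _ _).trans (Finset.sum_le_sum fun α _ => ?_)
    rw [norm_mul, norm_prod]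
    refine mul_le_of_le_one_right (norm_nonneg _) ?_
    refine Finset.prod_le_one (fun _ _ => norm_nonneg _) fun i _ => ?_
    rw [norm_pow]
    exact pow_le_one₀ (norm_nonneg _) (hz i)
  have hbdd : BddAbove (Set.range fun z : Fin N → ℂ =>
      ⨆ (_ : z ∈ {z : Fin N → ℂ | ∀ j, ‖z j‖ ≤ 1}), ‖∑ α ∈ A, c α * ∏ j, z j ^ α j‖) := by
    refine ⟨∑ α ∈ A, ‖c α‖, ?_⟩
    rintro _ ⟨z, rfl⟩
    exact Real.iSup_le (fun hz => hb z hz) (Finset.sum_nonneg fun _ _ => norm_nonneg _)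
  refine le_trans (le_of_eq ?_) (le_ciSup hbdd w)
  have hw' : w ∈ {z : Fin N → ℂ | ∀ j, ‖z j‖ ≤ 1} := hw
  simp only [hw', ciSup_pos]

end BH

/-- **Subexponential Bohnenblust–Hille constants (Bayart–Pellegrino–Seoane).**
For every `ε > 0` there is `κ > 0` such that for all `m, N ≥ 1` and every
`m`-homogeneous polynomial `P(z) = ∑_{|α|=m} c_α z^α` in `N` complex variables,
`(∑_{|α|=m} |c_α|^{2m/(m+1)})^{(m+1)/(2m)} ≤ κ (1+ε)^m · sup_{polydisc} |P|`. -/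
theorem bohnenblust_hille_subexponential (ε : ℝ) (hε : 0 < ε) :
    ∃ κ : ℝ, 0 < κ ∧ ∀ (m N : ℕ), 1 ≤ m → 1 ≤ N → ∀ c : (Fin N → ℕ) → ℂ,
      (∑ α ∈ Finset.Nat.antidiagonalTuple N m,
          ‖c α‖ ^ ((2 * m : ℝ) / (m + 1))) ^ (((m : ℝ) + 1) / (2 * m))
        ≤ κ * (1 + ε) ^ m *
          ⨆ z ∈ {z : Fin N → ℂ | ∀ j, ‖z j‖ ≤ 1},
            ‖∑ α ∈ Finset.Nat.antidiagonalTuple N m,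
              c α * ∏ j, z j ^ α j‖ := by
  obtain ⟨κ, hκ, h⟩ := BH.final_const ε hε
  refine ⟨κ, hκ, ?_⟩
  intro m N hm hN c
  obtain ⟨k, j, hkj, hle⟩ := h m hm
  have hs := BH.le_sup (Finset.Nat.antidiagonalTuple N m) c
  set M := ⨆ z ∈ {z : Fin N → ℂ | ∀ j, ‖z j‖ ≤ 1},
            ‖∑ α ∈ Finset.Nat.antidiagonalTuple N m,
              c α * ∏ j, z j ^ α j‖ with hM
  have hM0 : 0 ≤ M := le_trans (norm_nonneg _) (hs 0 (by simp))
  have hb := BH.poly_bound (N := N) k j c M hM0 (by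
    rw [← hkj]
    intro z hz
    have := hs z hz
    rwa [← Finset.piAntidiag_univ_fin_eq_antidiagonalTuple] at this)
  rw [← hkj] at hb
  have e : 1 / BH.pe m = ((m : ℝ) + 1) / (2 * m) := by rw [BH.pe, one_div_div]
  rw [e] at hb
  rw [← Finset.piAntidiag_univ_fin_eq_antidiagonalTuple]
  refine le_trans hb ?_
  calc _ = ((m : ℝ) ^ (((k + 1 : ℕ) : ℝ) / 2) * 2 ^ ((j:ℝ) / ((k + 1 : ℕ) : ℝ))) *
      (2 ^ k * 3 ^ (k + 1)) * M := by ring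
    _ ≤ _ := mul_le_mul_of_nonneg_right hle hM0
end

section
/- (Hypercontractive L^p–L² comparison for homogeneous polynomials on the torus.) For every p with 1 ≤ p ≤ 2 there exists a constant c_p > 0 such that for all m, N ≥ 1 and every m-homogeneous polynomial P(w) = ∑_{|α|=m} c_α w^α in N complex variables, (∑_{|α|=m} |c_α|²)^{1/2} ≤ c_p^m · (∫_{𝕋^N} |P(w)|^p dσ(w))^{1/p}, where σ is the normalized Haar measure on 𝕋^N. -/
open Finset MeasureTheory Real

/-- the monomial on the torus -/
noncomputable def torMon {N : ℕ} (α : Fin N → ℕ) (θ : Fin N → ℝ) : ℂ :=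
  ∏ j, Complex.exp (Complex.I * θ j) ^ α j

/-- the (unnormalised) measure -/
noncomputable def torMeas (N : ℕ) : Measure (Fin N → ℝ) :=
  volume.restrict (Set.univ.pi fun _ => Set.Icc 0 (2 * π))

lemma torMon_cont {N : ℕ} (α : Fin N → ℕ) : Continuous (torMon α) := by
  unfold torMon; fun_prop

lemma tor_int {N : ℕ} {E : Type*} [NormedAddCommGroup E] {f : (Fin N → ℝ) → E}
    (hf : Continuous f) : Integrable f (torMeas N) := by
  have : IsCompact (Set.univ.pi fun _ : Fin N => Set.Icc (0 : ℝ) (2 * π)) :=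
    isCompact_univ_pi fun _ => isCompact_Icc
  exact hf.continuousOn.integrableOn_compact this

lemma one_var (a b : ℕ) :
    ∫ x : ℝ in Set.Icc 0 (2 * π), Complex.exp (Complex.I * x) ^ a *
      (starRingEnd ℂ) (Complex.exp (Complex.I * x) ^ b) = if a = b then (2 * π : ℂ) else 0 := by
  have h : ∀ x : ℝ, Complex.exp (Complex.I * x) ^ a *
      (starRingEnd ℂ) (Complex.exp (Complex.I * x) ^ b)
      = Complex.exp ((((a : ℂ) - b) * Complex.I) * x) := by
    intro x
    rw [map_pow, ← Complex.exp_conj, ← Complex.exp_nat_mul, ← Complex.exp_nat_mul,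
      ← Complex.exp_add]
    congr 1
    simp
    ring
  simp_rw [h]
  rw [integral_Icc_eq_integral_Ioc, ← intervalIntegral.integral_of_le (by positivity)]
  split_ifs with hab
  · subst hab
    simp
  · have h0 : ((a : ℂ) - b) * Complex.I ≠ 0 := by
      apply mul_ne_zero _ Complex.I_ne_zero
      rw [sub_ne_zero]
      exact_mod_cast hab
    rw [integral_exp_mul_complex h0]
    have : Complex.exp (((a : ℂ) - b) * Complex.I * ((2 * π : ℝ) : ℂ)) = 1 := by
      rw [Complex.exp_eq_one_iff]
      exact ⟨(a : ℤ) - b, by push_cast; ring⟩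
    rw [this]
    simp

lemma tor_orth {N : ℕ} (α β : Fin N → ℕ) :
    ∫ θ, torMon α θ * (starRingEnd ℂ) (torMon β θ) ∂(torMeas N)
      = if α = β then (2 * π : ℂ) ^ N else 0 := by
  have hm : torMeas N = Measure.pi fun _ : Fin N => (volume : Measure ℝ).restrict (Set.Icc 0 (2 * π)) := by
    rw [torMeas, volume_pi, Measure.restrict_pi_pi]
  rw [hm]
  simp_rw [torMon, map_prod, ← Finset.prod_mul_distrib]
  rw [integral_fintype_prod_eq_prod (fun j (x : ℝ) => Complex.exp (Complex.I * x) ^ α j *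
      (starRingEnd ℂ) (Complex.exp (Complex.I * x) ^ β j))]
  simp_rw [one_var]
  split_ifs with h
  · subst h; simp
  · obtain ⟨j, hj⟩ := Function.ne_iff.mp h
    exact Finset.prod_eq_zero (Finset.mem_univ j) (by simp [hj])

lemma tor_parseval {N : ℕ} (A : Finset (Fin N → ℕ)) (d : (Fin N → ℕ) → ℂ) :
    ∫ θ, ‖∑ α ∈ A, d α * torMon α θ‖ ^ 2 ∂(torMeas N)
      = (2 * π) ^ N * ∑ α ∈ A, ‖d α‖ ^ 2 := by
  have key : ((∫ θ, ‖∑ α ∈ A, d α * torMon α θ‖ ^ 2 ∂(torMeas N) : ℝ) : ℂ)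
      = (((2 * π) ^ N * ∑ α ∈ A, ‖d α‖ ^ 2 : ℝ) : ℂ) := by
    rw [← integral_complex_ofReal]
    have h : ∀ θ, (((‖∑ α ∈ A, d α * torMon α θ‖ ^ 2 : ℝ)) : ℂ)
        = ∑ α ∈ A, ∑ β ∈ A, (d α * (starRingEnd ℂ) (d β)) *
          (torMon α θ * (starRingEnd ℂ) (torMon β θ)) := by
      intro θ
      rw [Complex.ofReal_pow, ← Complex.mul_conj', map_sum, Finset.sum_mul_sum]
      refine Finset.sum_congr rfl fun α _ => Finset.sum_congr rfl fun β _ => ?_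
      rw [map_mul]; ring
    simp_rw [h]
    have hc : ∀ α β : Fin N → ℕ, Continuous fun θ => (d α * (starRingEnd ℂ) (d β)) *
          (torMon α θ * (starRingEnd ℂ) (torMon β θ)) := fun α β =>
      continuous_const.mul ((torMon_cont α).mul (Complex.continuous_conj.comp (torMon_cont β)))
    rw [integral_finset_sum _ fun α _ => tor_int (continuous_finset_sum _ fun β _ => hc α β)]
    push_cast
    rw [Finset.mul_sum]
    refine Finset.sum_congr rfl fun α hα => ?_
    rw [integral_finset_sum _ fun β _ => tor_int (hc α β)]
    simp_rw [integral_const_mul, tor_orth]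
    simp only [mul_ite, mul_zero, Finset.sum_ite_eq, hα, if_true]
    rw [Complex.mul_conj']
    ring
  exact_mod_cast key

lemma tor_count {N : ℕ} (m : ℕ) (γ : Fin N → ℕ) (hγ : γ ∈ Finset.Nat.antidiagonalTuple N (2 * m)) 
    (S : Finset ((Fin N → ℕ) × (Fin N → ℕ))) (hS : ∀ x ∈ S, x.1 + x.2 = γ) :
    S.card ≤ 4 ^ m := by
  rw [Finset.Nat.mem_antidiagonalTuple] at hγ
  calc S.card ≤ (Fintype.piFinset fun j => Finset.range (γ j + 1)).card := by
        apply Finset.card_le_card_of_injOn Prod.fst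
        · intro x hx
          have := hS x hx
          simp only [Finset.mem_coe, Fintype.mem_piFinset, Finset.mem_range]
          intro j
          rw [← this, Pi.add_apply]
          omega
        · intro x hx y hy hxy
          have h1 := hS x hx
          have h2 := hS y hy
          ext1
          · exact hxy
          · rw [← h2, hxy] at h1
            exact add_left_cancel h1
    _ = ∏ j, (γ j + 1) := by simp
    _ ≤ ∏ j, 2 ^ γ j := Finset.prod_le_prod' fun j _ => Nat.lt_two_pow_self
    _ = 4 ^ m := by
        rw [Finset.prod_pow_eq_pow_sum, hγ, pow_mul]; norm_num

lemma tor_four {N : ℕ} (m : ℕ) (c : (Fin N → ℕ) → ℂ) :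
    ∫ θ, ‖∑ α ∈ Finset.Nat.antidiagonalTuple N m, c α * torMon α θ‖ ^ 4 ∂(torMeas N)
      ≤ (2 * π) ^ N * (4 ^ m * (∑ α ∈ Finset.Nat.antidiagonalTuple N m, ‖c α‖ ^ 2) ^ 2) := by
  classical
  set A := Finset.Nat.antidiagonalTuple N m with hA
  set B := Finset.Nat.antidiagonalTuple N (2 * m) with hB
  have hmaps : ∀ x ∈ A ×ˢ A, x.1 + x.2 ∈ B := by
    intro x hx
    rw [Finset.mem_product, hA, Finset.Nat.mem_antidiagonalTuple,
      Finset.Nat.mem_antidiagonalTuple] at hx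
    rw [hB, Finset.Nat.mem_antidiagonalTuple]
    simp only [Pi.add_apply, Finset.sum_add_distrib, hx.1, hx.2]
    ring
  set F : (Fin N → ℕ) → Finset ((Fin N → ℕ) × (Fin N → ℕ)) :=
    fun γ => (A ×ˢ A).filter fun x => x.1 + x.2 = γ with hF
  have hsq : ∀ θ, ‖∑ α ∈ A, c α * torMon α θ‖ ^ 4
      = ‖∑ γ ∈ B, (∑ x ∈ F γ, c x.1 * c x.2) * torMon γ θ‖ ^ 2 := by
    intro θ
    have : (∑ α ∈ A, c α * torMon α θ) ^ 2
        = ∑ γ ∈ B, (∑ x ∈ F γ, c x.1 * c x.2) * torMon γ θ := by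
      rw [sq, Finset.sum_mul_sum, ← Finset.sum_product', ← Finset.sum_fiberwise_of_maps_to hmaps]
      refine Finset.sum_congr rfl fun γ _ => ?_
      rw [Finset.sum_mul]
      refine Finset.sum_congr rfl fun x hx => ?_
      have hx2 := (Finset.mem_filter.mp hx).2
      rw [← hx2]
      simp only [torMon, Pi.add_apply, pow_add, Finset.prod_mul_distrib]
      ring
    rw [← this, norm_pow]
    ring
  simp_rw [hsq]
  rw [tor_parseval]
  apply mul_le_mul_of_nonneg_left _ (by positivity)
  calc ∑ γ ∈ B, ‖∑ x ∈ F γ, c x.1 * c x.2‖ ^ 2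
      ≤ ∑ γ ∈ B, 4 ^ m * ∑ x ∈ F γ, ‖c x.1‖ ^ 2 * ‖c x.2‖ ^ 2 := by
        refine Finset.sum_le_sum fun γ hγ => ?_
        calc ‖∑ x ∈ F γ, c x.1 * c x.2‖ ^ 2 ≤ (∑ x ∈ F γ, ‖c x.1 * c x.2‖) ^ 2 := by
              gcongr; exact norm_sum_le _ _
          _ ≤ (F γ).card * ∑ x ∈ F γ, ‖c x.1 * c x.2‖ ^ 2 := sq_sum_le_card_mul_sum_sq
          _ ≤ 4 ^ m * ∑ x ∈ F γ, ‖c x.1‖ ^ 2 * ‖c x.2‖ ^ 2 := by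
              simp_rw [norm_mul, mul_pow]
              gcongr
              exact_mod_cast tor_count m γ hγ (F γ) fun x hx => (Finset.mem_filter.mp hx).2
    _ = 4 ^ m * (∑ α ∈ A, ‖c α‖ ^ 2) ^ 2 := by
        rw [← Finset.mul_sum, Finset.sum_fiberwise_of_maps_to hmaps, sq (∑ α ∈ A, ‖c α‖ ^ 2),
          Finset.sum_mul_sum, ← Finset.sum_product']

lemma pointwise_young (p : ℝ) (hp2 : p ≤ 2) (l x : ℝ) (hl : 0 < l) (hx : 0 ≤ x) :
    x ^ 2 ≤ l ^ (2 - p) * x ^ p + (1 / l ^ 2) * x ^ 4 := by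
  rcases hx.eq_or_lt with rfl | hx0
  · have : 0 ≤ l ^ (2 - p) * (0 : ℝ) ^ p := by positivity
    simpa using this
  rcases le_total x l with h | h
  · have h1 : x ^ 2 = x ^ (2 - p) * x ^ p := by
      rw [← Real.rpow_add hx0, ← Real.rpow_natCast]; norm_num
    have h2 : x ^ (2 - p) ≤ l ^ (2 - p) := Real.rpow_le_rpow hx h (by linarith)
    have h3 : x ^ (2 - p) * x ^ p ≤ l ^ (2 - p) * x ^ p :=
      mul_le_mul_of_nonneg_right h2 (by positivity)
    have : 0 ≤ (1 / l ^ 2) * x ^ 4 := by positivity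
    linarith
  · have h1 : x ^ 2 ≤ (1 / l ^ 2) * x ^ 4 := by
      rw [one_div, inv_mul_eq_div, le_div_iff₀ (by positivity)]
      have : l ^ 2 ≤ x ^ 2 := by gcongr
      nlinarith [sq_nonneg x]
    have : 0 ≤ l ^ (2 - p) * x ^ p := by positivity
    linarith

lemma final_arith (p : ℝ) (hp1 : 1 ≤ p) (hp2 : p ≤ 2) (m : ℕ) (hm : 1 ≤ m) (S A : ℝ)
    (hS : 0 < S) (hA : 0 ≤ A)
    (h : ∀ l : ℝ, 0 < l → S ≤ l ^ (2 - p) * A + (1 / l ^ 2) * (4 ^ m * S ^ 2)) :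
    Real.sqrt S ≤ 8 ^ m * A ^ (1 / p) := by
  set s := Real.sqrt S with hs
  have hs0 : 0 < s := Real.sqrt_pos.mpr hS
  have hSs : S = s ^ 2 := (Real.sq_sqrt hS.le).symm
  -- take l = 2 * 2^m * s
  have h1 := h (2 * 2 ^ m * s) (by positivity)
  have h4 : (4 : ℝ) ^ m = (2 ^ m) ^ 2 := by
    rw [← pow_mul, mul_comm, pow_mul]; norm_num
  have e : (1 / (2 * 2 ^ m * s) ^ 2) * (4 ^ m * S ^ 2) = s ^ 2 / 4 := by
    rw [h4, hSs]; field_simp; norm_num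
  rw [e, hSs, Real.mul_rpow (by positivity) hs0.le] at h1
  have hpow : s ^ 2 = s ^ (2 - p) * s ^ p := by
    rw [← Real.rpow_add hs0, ← Real.rpow_natCast]; norm_num
  have hK : ((2 : ℝ) * 2 ^ m) ^ (2 - p) ≤ 2 * 2 ^ m := by
    have h1 : (1 : ℝ) ≤ 2 * 2 ^ m := by
      have : (1 : ℝ) ≤ 2 ^ m := one_le_pow₀ (by norm_num)
      linarith
    calc ((2 : ℝ) * 2 ^ m) ^ (2 - p) ≤ (2 * 2 ^ m) ^ (1 : ℝ) :=
          Real.rpow_le_rpow_of_exponent_le h1 (by linarith)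
      _ = _ := Real.rpow_one _
  have hsp : 0 < s ^ (2 - p) := by positivity
  have h2 : s ^ (2 - p) * (3 / 4 * s ^ p) ≤ s ^ (2 - p) * ((2 * 2 ^ m) * A) := by
    have : ((2 : ℝ) * 2 ^ m) ^ (2 - p) * s ^ (2 - p) * A ≤ (2 * 2 ^ m) * s ^ (2 - p) * A := by
      gcongr
    rw [hpow] at h1
    linarith
  have h3 := le_of_mul_le_mul_left h2 hsp
  have h5 : s ^ p ≤ 8 ^ m * A := by
    have : (8 : ℝ) ^ m = 4 ^ m * 2 ^ m := by rw [← mul_pow]; norm_num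
    have h6 : (4 : ℝ) ≤ 4 ^ m := by
      calc (4 : ℝ) = 4 ^ 1 := by norm_num
        _ ≤ 4 ^ m := pow_le_pow_right₀ (by norm_num) hm
    rw [this]
    have : 4 * (2 ^ m * A) ≤ 4 ^ m * (2 ^ m * A) := by gcongr
    have : 0 ≤ 2 ^ m * A := by positivity
    linarith
  have hp0 : 0 < p := by linarith
  calc s = (s ^ p) ^ (1 / p) := by
        rw [← Real.rpow_mul hs0.le, mul_one_div_cancel hp0.ne', Real.rpow_one]
    _ ≤ (8 ^ m * A) ^ (1 / p) := Real.rpow_le_rpow (by positivity) h5 (by positivity)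
    _ = (8 ^ m) ^ (1 / p) * A ^ (1 / p) := Real.mul_rpow (by positivity) hA
    _ ≤ 8 ^ m * A ^ (1 / p) := by
        gcongr
        calc ((8 : ℝ) ^ m) ^ (1 / p) ≤ (8 ^ m) ^ (1 : ℝ) := by
              apply Real.rpow_le_rpow_of_exponent_le (one_le_pow₀ (by norm_num))
              rw [div_le_one hp0]; exact hp1
          _ = _ := Real.rpow_one _



/-- **Hypercontractive `L^p`–`L²` comparison on the torus.** For every `1 ≤ p ≤ 2`
there is `c_p > 0`, independent of `m` and `N`, such that for every `m`-homogeneous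
polynomial `P(w) = ∑_{|α|=m} c_α w^α` in `N` complex variables,
`(∑_{|α|=m} |c_α|²)^{1/2} ≤ c_p^m (∫_{𝕋^N} |P(w)|^p dσ(w))^{1/p}`,
the torus `𝕋^N` being parametrized by `w_j = e^{iθ_j}`, `θ ∈ [0,2π]^N`, with
normalized Haar measure `dσ = dθ/(2π)^N`. -/
theorem hypercontractive_Lp_L2 (p : ℝ) (hp1 : 1 ≤ p) (hp2 : p ≤ 2) :
    ∃ cp : ℝ, 0 < cp ∧ ∀ (m N : ℕ), 1 ≤ m → 1 ≤ N → ∀ c : (Fin N → ℕ) → ℂ,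
      Real.sqrt (∑ α ∈ Finset.Nat.antidiagonalTuple N m, ‖c α‖ ^ 2)
        ≤ cp ^ m *
          ((1 / (2 * π) ^ N) *
            ∫ θ : Fin N → ℝ in Set.univ.pi fun _ => Set.Icc 0 (2 * π),
              ‖(∑ α ∈ Finset.Nat.antidiagonalTuple N m,
                c α * ∏ j, Complex.exp (Complex.I * θ j) ^ α j : ℂ)‖ ^ p) ^ (1 / p) := by
  refine ⟨8, by norm_num, fun m N hm _ c => ?_⟩
  have hp0 : 0 < p := by linarith
  set A := Finset.Nat.antidiagonalTuple N m with hA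
  change Real.sqrt (∑ α ∈ A, ‖c α‖ ^ 2) ≤ 8 ^ m * ((1 / (2 * π) ^ N) *
    ∫ θ, ‖∑ α ∈ A, c α * torMon α θ‖ ^ p ∂(torMeas N)) ^ (1 / p)
  have hA0 : 0 ≤ (1 / (2 * π) ^ N) *
      ∫ θ, ‖∑ α ∈ A, c α * torMon α θ‖ ^ p ∂(torMeas N) :=
    mul_nonneg (by positivity) (integral_nonneg fun θ => by positivity)
  have hS0 : 0 ≤ ∑ α ∈ A, ‖c α‖ ^ 2 := Finset.sum_nonneg fun _ _ => by positivity
  rcases hS0.eq_or_lt with h0 | hS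
  · rw [← h0, Real.sqrt_zero]
    positivity
  refine final_arith p hp1 hp2 m hm _ _ hS hA0 fun l hl => ?_
  have hP : Continuous fun θ => ‖∑ α ∈ A, c α * torMon α θ‖ :=
    (continuous_finset_sum _ fun α _ => continuous_const.mul (torMon_cont α)).norm
  have hip := (tor_int (hP.rpow_const fun _ => Or.inr hp0.le)).const_mul (l ^ (2 - p))
  have hi4 := (tor_int (hP.pow 4)).const_mul (1 / l ^ 2)
  have hmono := integral_mono (tor_int (hP.pow 2)) (hip.add hi4)
    fun θ => pointwise_young p hp2 l _ hl (norm_nonneg (∑ α ∈ A, c α * torMon α θ))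
  rw [integral_add' hip hi4, integral_const_mul, integral_const_mul] at hmono
  simp only [Pi.pow_apply] at hmono
  rw [tor_parseval] at hmono
  have h4 := mul_le_mul_of_nonneg_left (tor_four m c) (by positivity : 0 ≤ 1 / l ^ 2)
  rw [← hA] at h4
  have hV : 0 < (2 * π) ^ N := by positivity
  refine le_of_mul_le_mul_left ?_ hV
  refine (hmono.trans (add_le_add_right h4 _)).trans (le_of_eq ?_)
  field_simp
end
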